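/- arXiv:0808.0133 — 2 statements merged into one kernel-verified Lean document; each statement's English description precedes it below -/
import Mathlib

section
/- Let 𝓗 ⊂ SL(2,ℝ)² be the set of pairs uniformly hyperbolic with respect to the full shift on two symbols, and let 𝓔 ⊂ SL(2,ℝ)² be the set of pairs having an elliptic product. Then the frontier of 𝓗 equals the frontier of 𝓔, and both equal the complement of 𝓗 ∪ 𝓔; in particular SL(2,ℝ)² is the disjoint union of the open sets 𝓗 and 𝓔 and their common boundary. -/
/-!
The statement follows from one alternative (`Cl_of_not_E`) for a pair `p = (A, B)` without elliptic
products: `p` is a limit of interior points of `𝓗`, and either `p` is interior to `𝓗` or `p` is a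
non-hyperbolic limit of pairs in `𝓔`. Since elliptic matrices have bounded powers, `𝓗` and `𝓔` are
disjoint, so the alternative says that `𝓗` is open, that `closure 𝓗 = 𝓔ᶜ` and that
`closure 𝓔 = 𝓗ᶜ`, and the frontiers can be read off.

After sign changes, `x = tr A` and `y = tr B` are at least `2`, and a simultaneous conjugation puts
the pair into triangular form: `A` upper triangular with corner `b`, and `B` upper or lower
triangular with corner `c` (`normal_form`).

If the two matrices have a common eigendirection, or if `b c ≥ 0` in the lower triangular case, the
pair is conjugate to nonnegative matrices, or a limit of such pairs. Positive pairs are hyperbolic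
because the product of the coordinates of a positive vector grows (`PosPairs_subset_UH`), and
nonnegative pairs are limits of positive ones. The boundary cases are parabolic matrices, which have
linear growth and become elliptic after a small rotation, and heteroclinic connections, for which
suitable products `A^m B^n` stay bounded and a small perturbation makes `tr (A^m B^m)` vanish.

If `b c < 0`, then with `z = tr (AB)` one has `2 z < x y` and
`κ = x² + y² + z² - x y z - 4 > 0`. As long as `z ≥ 2`, the map `F₊ : (A, B) ↦ (A, AB)`, applied after
ordering the traces, preserves these conditions and decreases the sum of the traces by at least
`2 √κ` (`descent`); so after finitely many steps the pair is in the free cone `z ≤ -2`. In the strict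
free cone (`Hs_subset_GH`), `A` and `B` are products of three reflections of the Lorentzian space of
traceless matrices whose vectors have scalar products less than `-1`. A ping-pong argument (`act_step`)
gives exponential growth along the whole free group, and not merely along the semigroup. This
property is independent of the basis of the free group (`GH_of_change`), so it can be transported
back through the descent.
-/

open Matrix

noncomputable section

/-- `SL(2,ℝ)`. -/
abbrev SL2 := Matrix.SpecialLinearGroup (Fin 2) ℝ

/-- Operator norm of a `2 × 2` real matrix, induced by the Euclidean norm on `ℝ²`. -/
noncomputable def opNorm (A : Matrix (Fin 2) (Fin 2) ℝ) : ℝ :=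
  ‖Matrix.toEuclideanCLM (𝕜 := ℝ) A‖

/-- Trace of an element of `SL(2,ℝ)`. -/
def trace2 (A : SL2) : ℝ := Matrix.trace (A : Matrix (Fin 2) (Fin 2) ℝ)

/-- Topology on `SL(2,ℝ)` induced from the space of `2 × 2` real matrices. -/
instance : TopologicalSpace SL2 := instTopologicalSpaceSubtype

/-- The real projective line: quotient of `ℝ² ∖ {0}` by nonzero scalar multiplication. -/
abbrev P1 := Projectivization ℝ (Fin 2 → ℝ)

/-- The quotient topology on the real projective line. -/
instance : TopologicalSpace P1 := instTopologicalSpaceQuotient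

/-- The projective action of `SL(2,ℝ)` on the real projective line. -/
def projAct (A : SL2) : P1 → P1 :=
  Projectivization.map (Matrix.SpecialLinearGroup.toLin' A).toLinearMap
    (Matrix.SpecialLinearGroup.toLin' A).injective

/-- For a word `w = [i₁, …, iₙ]`, the product `A_{iₙ} ⋯ A_{i₁}`. -/
def wordProd {N : ℕ} (A : Fin N → SL2) (w : List (Fin N)) : SL2 :=
  (w.reverse.map A).prod

/-- Uniform hyperbolicity with respect to the full shift on `N` symbols:
every product of `n` matrices has operator norm at least `C·λⁿ`. -/
def UnifHyp {N : ℕ} (A : Fin N → SL2) : Prop :=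
  ∃ C > (0:ℝ), ∃ lam > (1:ℝ), ∀ w : List (Fin N), w ≠ [] →
    opNorm (wordProd A w : Matrix (Fin 2) (Fin 2) ℝ) ≥ C * lam ^ w.length

/-- Transitivity of the subshift of finite type given by the transition relation `T`:
any symbol can be joined to any other by an admissible word. -/
def TransitiveSubshift {N : ℕ} (T : Fin N → Fin N → Prop) : Prop :=
  ∀ α β : Fin N, ∃ w : List (Fin N), w ≠ [] ∧ w.Chain' T ∧
    w.head? = some α ∧ w.getLast? = some β

/-- Uniform hyperbolicity with respect to the subshift determined by the
transition relation `T`. -/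
def UnifHypSub {N : ℕ} (T : Fin N → Fin N → Prop) (A : Fin N → SL2) : Prop :=
  ∃ C > (0:ℝ), ∃ lam > (1:ℝ), ∀ w : List (Fin N), w ≠ [] → w.Chain' T →
    opNorm (wordProd A w : Matrix (Fin 2) (Fin 2) ℝ) ≥ C * lam ^ w.length

/-- For a word `w` in two letters (`true ↦ A`, `false ↦ B`), the corresponding
product of the matrices `A`, `B` (letters applied right-to-left). -/
def pairProd (A B : SL2) (w : List Bool) : SL2 :=
  (w.reverse.map fun b => if b then A else B).prod

/-- Uniform hyperbolicity of a pair `(A,B)` with respect to the full shift on two symbols. -/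
def UnifHypPair (A B : SL2) : Prop :=
  ∃ C > (0:ℝ), ∃ lam > (1:ℝ), ∀ w : List Bool, w ≠ [] →
    opNorm (pairProd A B w : Matrix (Fin 2) (Fin 2) ℝ) ≥ C * lam ^ w.length

/-- The hyperbolicity locus for the full shift on two symbols. -/
def UHpairs : Set (SL2 × SL2) := {p | UnifHypPair p.1 p.2}

/-- The set of pairs having an elliptic product. -/
def Epairs : Set (SL2 × SL2) :=
  {p | ∃ w : List Bool, w ≠ [] ∧ |trace2 (pairProd p.1 p.2 w)| < 2}

/-- An open interval in the projective line: a nonempty open connected subset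
whose complement contains more than one point. -/
def IsOpenInterval (I : Set P1) : Prop :=
  IsOpen I ∧ IsConnected I ∧ Iᶜ.Nontrivial

/-- `H₀`: pairs possessing a common strictly invariant open interval. -/
def H0 : Set (SL2 × SL2) :=
  {p | ∃ I : Set P1, IsOpenInterval I ∧
        projAct p.1 '' closure I ⊆ I ∧ projAct p.2 '' closure I ⊆ I}

/-- `H_id`: pairs with `|tr A| > 2`, `|tr B| > 2`, `|tr AB| > 2`, `tr A · tr B · tr AB < 0`. -/
def Hid : Set (SL2 × SL2) :=
  {p | 2 < |trace2 p.1| ∧ 2 < |trace2 p.2| ∧ 2 < |trace2 (p.1 * p.2)| ∧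
       trace2 p.1 * trace2 p.2 * trace2 (p.1 * p.2) < 0}

/-- `F₊(A,B) = (A, AB)`. -/
def Fplus (p : SL2 × SL2) : SL2 × SL2 := (p.1, p.1 * p.2)

/-- `F₋(A,B) = (BA, B)`. -/
def Fminus (p : SL2 × SL2) : SL2 × SL2 := (p.2 * p.1, p.2)

/-- `applySeq [ε₁, …, ε_k] = F_{ε_k} ∘ ⋯ ∘ F_{ε₁}`, where `true` stands for `+`
and `false` for `−`. -/
def applySeq (s : List Bool) (p : SL2 × SL2) : SL2 × SL2 :=
  s.foldl (fun q e => if e then Fplus q else Fminus q) p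

/-- A pair `(A,B)` is free if `|tr A| ≥ 2`, `|tr B| ≥ 2`, `|tr AB| ≥ 2` and
`tr A · tr B · tr AB < 0`. -/
def FreePair (p : SL2 × SL2) : Prop :=
  2 ≤ |trace2 p.1| ∧ 2 ≤ |trace2 p.2| ∧ 2 ≤ |trace2 (p.1 * p.2)| ∧
    trace2 p.1 * trace2 p.2 * trace2 (p.1 * p.2) < 0

/-- A pair is straight if it lies in the closure of `H₀`. -/
def Straight (p : SL2 × SL2) : Prop := p ∈ closure H0

/-- A pair `(A,B)` is twisted if `|tr A| ≥ 2`, `|tr B| ≥ 2` and it is not straight. -/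
def Twisted (p : SL2 × SL2) : Prop :=
  2 ≤ |trace2 p.1| ∧ 2 ≤ |trace2 p.2| ∧ ¬ Straight p

/-- A pair is almost hyperbolic if every image of it under the monoid generated by
`F₊`, `F₋` consists of two non-elliptic matrices. -/
def AlmostHyperbolic (p : SL2 × SL2) : Prop :=
  ∀ s : List Bool, 2 ≤ |trace2 (applySeq s p).1| ∧ 2 ≤ |trace2 (applySeq s p).2|

/-- Group-hyperbolicity of a pair: exponential growth over all reduced words
in the free group on two generators (`true ↦ A`, `false ↦ B`). -/
def GroupHyp (A B : SL2) : Prop :=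
  ∃ C > (0:ℝ), ∃ τ > (0:ℝ), ∀ g : FreeGroup Bool, g ≠ 1 →
    opNorm ((FreeGroup.lift (fun b => if b then A else B) g : SL2) :
        Matrix (Fin 2) (Fin 2) ℝ) ≥
      C * Real.exp (τ * (FreeGroup.toWord g).length)

/-- `M` has finitely many connected components, and distinct components have
disjoint closures. -/
def FinCompDisjClosures (M : Set P1) : Prop :=
  {C : Set P1 | ∃ x ∈ M, C = connectedComponentIn M x}.Finite ∧
    ∀ x ∈ M, ∀ y ∈ M, connectedComponentIn M x ≠ connectedComponentIn M y →
      closure (connectedComponentIn M x) ∩ closure (connectedComponentIn M y) = ∅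

end

/-! ### Norms and words -/

abbrev M2 := Matrix (Fin 2) (Fin 2) ℝ

/-- The entrywise `ℓ¹` norm of a `2 × 2` matrix. -/
def en (M : M2) : ℝ := |M 0 0| + |M 0 1| + |M 1 0| + |M 1 1|

lemma en_nonneg (M : M2) : 0 ≤ en M := by unfold en; positivity

lemma en_mul (M N : M2) : en (M * N) ≤ en M * en N := by
  unfold en
  simp only [Matrix.mul_apply, Fin.sum_univ_two]
  have h : ∀ a b c d : ℝ, |a * b + c * d| ≤ |a| * |b| + |c| * |d| := fun a b c d => by
    rw [← abs_mul, ← abs_mul]; exact abs_add_le _ _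
  have h1 := h (M 0 0) (N 0 0) (M 0 1) (N 1 0)
  have h2 := h (M 0 0) (N 0 1) (M 0 1) (N 1 1)
  have h3 := h (M 1 0) (N 0 0) (M 1 1) (N 1 0)
  have h4 := h (M 1 0) (N 0 1) (M 1 1) (N 1 1)
  nlinarith [mul_nonneg (abs_nonneg (M 0 0)) (abs_nonneg (N 1 0)),
    mul_nonneg (abs_nonneg (M 0 0)) (abs_nonneg (N 1 1)),
    mul_nonneg (abs_nonneg (M 0 1)) (abs_nonneg (N 0 0)),
    mul_nonneg (abs_nonneg (M 0 1)) (abs_nonneg (N 0 1)),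
    mul_nonneg (abs_nonneg (M 1 0)) (abs_nonneg (N 1 0)),
    mul_nonneg (abs_nonneg (M 1 0)) (abs_nonneg (N 1 1)),
    mul_nonneg (abs_nonneg (M 1 1)) (abs_nonneg (N 0 0)),
    mul_nonneg (abs_nonneg (M 1 1)) (abs_nonneg (N 0 1))]

lemma en_neg (M : M2) : en (-M) = en M := by simp [en]

lemma en_add (M N : M2) : en (M + N) ≤ en M + en N := by
  unfold en
  simp only [Matrix.add_apply]
  linarith [abs_add_le (M 0 0) (N 0 0), abs_add_le (M 0 1) (N 0 1), abs_add_le (M 1 0) (N 1 0),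
    abs_add_le (M 1 1) (N 1 1)]

lemma en_smul (r : ℝ) (M : M2) : en (r • M) = |r| * en M := by
  simp [en, abs_mul]; ring

lemma en_one : en 1 = 2 := by norm_num [en]

lemma abs_trace_le_en (M : M2) : |M.trace| ≤ en M := by
  rw [Matrix.trace_fin_two]
  unfold en
  linarith [abs_add_le (M 0 0) (M 1 1), abs_nonneg (M 0 1), abs_nonneg (M 1 0)]

/-- Inversion preserves `en` on `SL(2,ℝ)`, the inverse being the adjugate. -/
lemma en_inv (A : SL2) : en (A⁻¹ : SL2).1 = en A.1 := by
  rw [Matrix.SpecialLinearGroup.coe_inv, Matrix.adjugate_fin_two]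
  simp [en]; ring

lemma opNorm_le_en (M : M2) : opNorm M ≤ en M := by
  refine ContinuousLinearMap.opNorm_le_bound _ (en_nonneg M) fun v => ?_
  rw [EuclideanSpace.norm_eq, EuclideanSpace.norm_eq]
  apply Real.sqrt_le_iff.2
  refine ⟨mul_nonneg (en_nonneg M) (Real.sqrt_nonneg _), ?_⟩
  rw [mul_pow, Real.sq_sqrt (by positivity)]
  simp only [Matrix.ofLp_toEuclideanCLM, Matrix.mulVec, dotProduct, Fin.sum_univ_two,
    Real.norm_eq_abs, sq_abs]
  generalize v.ofLp 0 = x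
  generalize v.ofLp 1 = y
  have h1 : ∀ a b : ℝ, (a * x + b * y) ^ 2 ≤ (a ^ 2 + b ^ 2) * (x ^ 2 + y ^ 2) := fun a b => by
    nlinarith [sq_nonneg (a * y - b * x)]
  have h2 : M 0 0 ^ 2 + M 0 1 ^ 2 + (M 1 0 ^ 2 + M 1 1 ^ 2) ≤ en M ^ 2 := by
    unfold en
    rw [← sq_abs (M 0 0), ← sq_abs (M 0 1), ← sq_abs (M 1 0), ← sq_abs (M 1 1)]
    have := abs_nonneg (M 0 0)
    have := abs_nonneg (M 0 1)
    have := abs_nonneg (M 1 0)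
    have := abs_nonneg (M 1 1)
    nlinarith [mul_nonneg (abs_nonneg (M 0 0)) (abs_nonneg (M 0 1)),
      mul_nonneg (abs_nonneg (M 0 0)) (abs_nonneg (M 1 0)),
      mul_nonneg (abs_nonneg (M 0 0)) (abs_nonneg (M 1 1)),
      mul_nonneg (abs_nonneg (M 0 1)) (abs_nonneg (M 1 0)),
      mul_nonneg (abs_nonneg (M 0 1)) (abs_nonneg (M 1 1)),
      mul_nonneg (abs_nonneg (M 1 0)) (abs_nonneg (M 1 1))]
  have := mul_le_mul_of_nonneg_right h2 (by positivity : 0 ≤ x ^ 2 + y ^ 2)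
  linarith [h1 (M 0 0) (M 0 1), h1 (M 1 0) (M 1 1)]

lemma abs_entry_le_opNorm (M : M2) (i j : Fin 2) : |M i j| ≤ opNorm M := by
  have h := (Matrix.toEuclideanCLM (𝕜 := ℝ) M).le_opNorm (EuclideanSpace.single j 1)
  rw [PiLp.norm_single, norm_one, mul_one] at h
  refine le_trans ?_ h
  have := PiLp.norm_apply_le (Matrix.toEuclideanCLM (𝕜 := ℝ) M (EuclideanSpace.single j 1)) i
  simpa [Matrix.ofLp_toEuclideanCLM] using this

lemma en_le_opNorm (M : M2) : en M ≤ 4 * opNorm M := by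
  unfold en
  linarith [abs_entry_le_opNorm M 0 0, abs_entry_le_opNorm M 0 1, abs_entry_le_opNorm M 1 0,
    abs_entry_le_opNorm M 1 1]

/-- The product of the letters of `w` in the order in which they are written; `pairProd` uses
the reverse order, which is immaterial for hyperbolicity and for elliptic products. -/
def wp (p : SL2 × SL2) (w : List Bool) : SL2 := (w.map fun b => if b then p.1 else p.2).prod

lemma wp_nil (p : SL2 × SL2) : wp p [] = 1 := rfl

lemma wp_cons (p : SL2 × SL2) (b : Bool) (w : List Bool) :
    wp p (b :: w) = (if b then p.1 else p.2) * wp p w := by simp [wp]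

lemma wp_append (p : SL2 × SL2) (v w : List Bool) : wp p (v ++ w) = wp p v * wp p w := by
  simp [wp]

lemma wp_replicate (p : SL2 × SL2) (b : Bool) (n : ℕ) :
    wp p (List.replicate n b) = (if b then p.1 else p.2) ^ n := by
  simp [wp]

lemma mem_UH_iff (p : SL2 × SL2) : p ∈ UHpairs ↔ ∃ C > (0:ℝ), ∃ lam > (1:ℝ),
    ∀ w : List Bool, w ≠ [] → C * lam ^ w.length ≤ en (wp p w).1 := by
  constructor
  · rintro ⟨C, hC, lam, hl, h⟩
    refine ⟨C, hC, lam, hl, fun w hw => ?_⟩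
    have := h w.reverse (by simpa using hw)
    rw [pairProd, List.reverse_reverse, List.length_reverse] at this
    exact le_trans this (opNorm_le_en _)
  · rintro ⟨C, hC, lam, hl, h⟩
    refine ⟨C / 4, by positivity, lam, hl, fun w hw => ?_⟩
    have := h w.reverse (by simpa using hw)
    rw [List.length_reverse] at this
    have h4 := en_le_opNorm (pairProd p.1 p.2 w).1
    have h5 : (wp p w.reverse) = pairProd p.1 p.2 w := rfl
    rw [h5] at this
    show _ ≤ _
    linarith

lemma mem_E_iff (p : SL2 × SL2) : p ∈ Epairs ↔ ∃ w : List Bool, w ≠ [] ∧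
    |trace2 (wp p w)| < 2 := by
  constructor
  · rintro ⟨w, hw, h⟩
    exact ⟨w.reverse, by simpa using hw, h⟩
  · rintro ⟨w, hw, h⟩
    refine ⟨w.reverse, by simpa using hw, ?_⟩
    rw [pairProd, List.reverse_reverse]
    exact h

/-! ### Topology -/

lemma continuous_sl2_iff {X : Type*} [TopologicalSpace X] {f : X → SL2} :
    Continuous f ↔ ∀ i j, Continuous fun x => (f x).1 i j := by
  refine continuous_induced_rng.trans ?_
  exact ⟨fun h i j => h.matrix_elem i j, fun h => continuous_matrix h⟩

lemma continuous_entry (i j : Fin 2) : Continuous fun A : SL2 => A.1 i j :=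
  continuous_sl2_iff.1 continuous_id i j

lemma continuous_trace2 : Continuous trace2 := by
  unfold trace2
  simp only [Matrix.trace_fin_two]
  exact (continuous_entry 0 0).add (continuous_entry 1 1)

lemma Continuous.sl2_mul {X : Type*} [TopologicalSpace X] {f g : X → SL2}
    (hf : Continuous f) (hg : Continuous g) : Continuous fun x => f x * g x := by
  rw [continuous_sl2_iff] at *
  intro i j
  simp only [Matrix.SpecialLinearGroup.coe_mul, Matrix.mul_apply]
  exact continuous_finsetSum _ fun k _ => (hf i k).mul (hg k j)

lemma Continuous.sl2_inv {X : Type*} [TopologicalSpace X] {f : X → SL2}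
    (hf : Continuous f) : Continuous fun x => (f x)⁻¹ := by
  rw [continuous_sl2_iff] at *
  intro i j
  simp only [Matrix.SpecialLinearGroup.coe_inv, Matrix.adjugate_fin_two]
  fin_cases i <;> fin_cases j <;> simp <;> first | exact hf _ _ | exact (hf _ _).neg

lemma continuous_wp (w : List Bool) : Continuous fun p : SL2 × SL2 => wp p w := by
  induction w with
  | nil => exact continuous_const
  | cons b w ih =>
    simp only [wp_cons]
    cases b
    · simpa using continuous_snd.sl2_mul ih
    · simpa using continuous_fst.sl2_mul ih

lemma isOpen_E : IsOpen Epairs := by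
  have : Epairs = ⋃ w : {w : List Bool // w ≠ []}, {p | |trace2 (wp p w.1)| < 2} := by
    ext p
    rw [mem_E_iff]
    simp
  rw [this]
  exact isOpen_iUnion fun w =>
    isOpen_lt (continuous_trace2.comp (continuous_wp w.1)).abs continuous_const

lemma tr_eq (A : SL2) : trace2 A = A.1 0 0 + A.1 1 1 := by
  rw [trace2, Matrix.trace_fin_two]

lemma det_eq (A : SL2) : A.1 0 0 * A.1 1 1 - A.1 0 1 * A.1 1 0 = 1 := by
  rw [← Matrix.det_fin_two]; exact A.2

/-! ### Subexponential growth excludes uniform hyperbolicity -/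

lemma not_UH_of_linear {p : SL2 × SL2} (K : ℝ) (W : ℕ → List Bool)
    (hW : ∀ n, n < (W n).length) (h : ∀ n, en (wp p (W n)).1 ≤ K * (n + 1)) :
    p ∉ UHpairs := by
  rw [mem_UH_iff]
  rintro ⟨C, hC, lam, hl, H⟩
  have h1 : ∀ n : ℕ, C * lam ^ (n + 1) ≤ K * (n + 1) := fun n => by
    have h2 := H (W n) (fun e => by have := hW n; rw [e] at this; simp at this)
    have h3 : lam ^ (n + 1) ≤ lam ^ (W n).length := pow_le_pow_right₀ hl.le (hW n)
    nlinarith [h n]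
  have h2 := (tendsto_pow_const_div_const_pow_of_one_lt 1 hl).const_mul K
  rw [mul_zero] at h2
  have h3 := (h2.comp (Filter.tendsto_add_atTop_nat 1)).eventually (gt_mem_nhds hC)
  obtain ⟨n, hn⟩ := h3.exists
  have h4 : 0 < lam ^ (n + 1) := by positivity
  simp only [Function.comp_apply, pow_one] at hn
  rw [← mul_div_assoc, div_lt_iff₀ h4] at hn
  have := h1 n
  push_cast at hn
  linarith

/-- Cayley–Hamilton for a matrix of trace `2 τ`, `τ = ±1`: its powers grow linearly. -/
lemma pow_of_parabolic (A : SL2) (τ : ℝ) (hτ : τ ^ 2 = 1) (h : trace2 A = 2 * τ) (n : ℕ) :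
    (A ^ (n + 1) : SL2).1 = ((n + 1) * τ ^ n) • A.1 - (n * τ ^ (n + 1)) • (1 : M2) := by
  have hd := det_eq A
  rw [tr_eq] at h
  have hsq : A.1 * A.1 = (2 * τ) • A.1 - (1 : M2) := by
    ext i j
    fin_cases i <;> fin_cases j <;> simp [Matrix.mul_apply, Fin.sum_univ_two]
    · linear_combination A.1 0 0 * h - hd
    · linear_combination A.1 0 1 * h
    · linear_combination A.1 1 0 * h
    · linear_combination A.1 1 1 * h - hd
  induction n with
  | zero => simp
  | succ n ih =>
    rw [pow_succ, Matrix.SpecialLinearGroup.coe_mul, ih, sub_mul, smul_mul_assoc, smul_mul_assoc,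
      hsq, one_mul, smul_sub, smul_smul]
    have e : ((n : ℝ) + 1) * τ ^ n = (n + 1) * τ ^ (n + 2) := by rw [pow_add, hτ, mul_one]
    ext i j
    simp only [Matrix.sub_apply, Matrix.smul_apply, smul_eq_mul]
    push_cast
    rw [e]
    ring_nf
    linear_combination (A.1 i j * (n + 1) * 2 * τ ^ (n + 1)) * hτ

lemma not_UH_of_parabolic {p : SL2 × SL2} (b : Bool)
    (h : |trace2 (if b then p.1 else p.2)| = 2) : p ∉ UHpairs := by
  set A := if b then p.1 else p.2 with hA
  obtain ⟨τ, hτ, hτ1, ht⟩ : ∃ τ : ℝ, τ ^ 2 = 1 ∧ |τ| = 1 ∧ trace2 A = 2 * τ := by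
    rcases (abs_eq (by norm_num : (0:ℝ) ≤ 2)).1 h with h | h
    · exact ⟨1, by norm_num, by norm_num, by rw [h]; norm_num⟩
    · exact ⟨-1, by norm_num, by norm_num, by rw [h]; norm_num⟩
  refine not_UH_of_linear (en A.1 + 2) (fun n => List.replicate (n + 1) b) (by simp) fun n => ?_
  rw [wp_replicate, ← hA, pow_of_parabolic A τ hτ ht, sub_eq_add_neg]
  refine (en_add _ _).trans ?_
  rw [en_neg, en_smul, en_smul, en_one, abs_mul, abs_mul, abs_pow, abs_pow, hτ1]
  simp only [one_pow, mul_one, Nat.abs_cast]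
  have : |(n : ℝ) + 1| = n + 1 := abs_of_nonneg (by positivity)
  rw [this]
  nlinarith

/-- Cayley–Hamilton for an elliptic matrix: `sin θ · Aⁿ = sin (nθ) A - sin ((n-1)θ)`. -/
lemma pow_of_elliptic (A : SL2) (θ : ℝ) (h : trace2 A = 2 * Real.cos θ) (n : ℕ) :
    Real.sin θ • (A ^ n : SL2).1 =
      Real.sin (n * θ) • A.1 - Real.sin (n * θ - θ) • (1 : M2) := by
  have hd := det_eq A
  rw [tr_eq] at h
  have hsq : A.1 * A.1 = (2 * Real.cos θ) • A.1 - (1 : M2) := by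
    ext i j
    fin_cases i <;> fin_cases j <;> simp [Matrix.mul_apply, Fin.sum_univ_two]
    · linear_combination A.1 0 0 * h - hd
    · linear_combination A.1 0 1 * h
    · linear_combination A.1 1 0 * h
    · linear_combination A.1 1 1 * h - hd
  induction n with
  | zero => simp
  | succ n ih =>
    rw [pow_succ, Matrix.SpecialLinearGroup.coe_mul, ← smul_mul_assoc, ih, sub_mul,
      smul_mul_assoc, smul_mul_assoc, hsq, one_mul, smul_sub, smul_smul]
    ext i j
    simp only [Matrix.sub_apply, Matrix.smul_apply, smul_eq_mul]
    push_cast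
    have e1 : ((n : ℝ) + 1) * θ = n * θ + θ := by ring
    have e2 : (n : ℝ) * θ + θ - θ = n * θ := by ring
    rw [e1, e2, Real.sin_add, Real.sin_sub]
    ring

lemma wp_flatten_replicate (p : SL2 × SL2) (w : List Bool) (n : ℕ) :
    wp p (List.replicate n w).flatten = wp p w ^ n := by
  induction n with
  | zero => simp [wp_nil]
  | succ n ih => rw [List.replicate_succ, List.flatten_cons, wp_append, ih, pow_succ']

/-- An elliptic matrix has bounded powers, so `𝓗` and `𝓔` are disjoint. -/
lemma disjoint_UH_E : Disjoint UHpairs Epairs := by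
  rw [Set.disjoint_right]
  intro p hE
  obtain ⟨w, hw, ht⟩ := (mem_E_iff p).1 hE
  set A := wp p w with hA
  rw [abs_lt] at ht
  set θ := Real.arccos (trace2 A / 2)
  have hcos : trace2 A = 2 * Real.cos θ := by
    rw [Real.cos_arccos (by linarith) (by linarith)]; ring
  have hsin : 0 < Real.sin θ :=
    Real.sin_pos_of_pos_of_lt_pi (Real.arccos_pos.2 (by linarith))
      (lt_of_le_of_ne (Real.arccos_le_pi _) fun e => by
        rw [Real.arccos_eq_pi] at e; linarith)
  refine not_UH_of_linear ((en A.1 + 2) / Real.sin θ)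
    (fun n => (List.replicate (n + 1) w).flatten) (fun n => ?_) fun n => ?_
  · have := List.length_pos_iff.2 hw
    simp only [List.length_flatten, List.map_replicate, List.sum_replicate, smul_eq_mul]
    nlinarith
  · rw [wp_flatten_replicate, ← hA]
    have h1 := congrArg en (pow_of_elliptic A θ hcos (n + 1))
    rw [en_smul, abs_of_pos hsin, sub_eq_add_neg] at h1
    have h2 := en_add (Real.sin ((n + 1 : ℕ) * θ) • A.1)
      (-(Real.sin ((n + 1 : ℕ) * θ - θ) • (1 : M2)))
    rw [en_neg, en_smul, en_smul, en_one] at h2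
    have h3 := Real.abs_sin_le_one ((n + 1 : ℕ) * θ)
    have h4 := Real.abs_sin_le_one ((n + 1 : ℕ) * θ - θ)
    have h5 : Real.sin θ * en (A ^ (n + 1) : SL2).1 ≤ en A.1 + 2 := by
      nlinarith [en_nonneg A.1]
    have h6 : en (A ^ (n + 1) : SL2).1 ≤ (en A.1 + 2) / Real.sin θ := by
      rw [le_div_iff₀ hsin]; linarith
    have h7 : 0 ≤ (en A.1 + 2) / Real.sin θ := div_nonneg (by linarith [en_nonneg A.1]) hsin.le
    nlinarith [Nat.cast_nonneg (α := ℝ) n]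

/-- The alternative satisfied by a pair without elliptic products: for `S` equal to `𝓗`, or to the
subset `GH` of `𝓗`, the pair is a limit of interior points of `S`, and it is itself interior to `S`
or else a non-hyperbolic limit of pairs having an elliptic product. -/
def Cl (S : Set (SL2 × SL2)) (p : SL2 × SL2) : Prop :=
  p ∈ closure (interior S) ∧ (p ∈ interior S ∨ (p ∈ closure Epairs ∧ p ∉ UHpairs))

lemma Cl.mono {S S' : Set (SL2 × SL2)} (h : S ⊆ S') {p : SL2 × SL2} (hp : Cl S p) : Cl S' p :=
  ⟨closure_mono (interior_mono h) hp.1, hp.2.imp_left fun hi => interior_mono h hi⟩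

lemma Cl.of_interior {S : Set (SL2 × SL2)} {p : SL2 × SL2} (hp : p ∈ interior S) : Cl S p :=
  ⟨subset_closure hp, Or.inl hp⟩

lemma mem_interior_pull (φ : (SL2 × SL2) ≃ₜ (SL2 × SL2)) {S : Set (SL2 × SL2)}
    (hS : ∀ p, φ p ∈ S → p ∈ S) {p : SL2 × SL2} (hp : φ p ∈ interior S) : p ∈ interior S := by
  have : p ∈ φ ⁻¹' interior S := hp
  rw [φ.preimage_interior] at this
  exact interior_mono hS this

lemma mem_closure_pull (φ : (SL2 × SL2) ≃ₜ (SL2 × SL2)) {S : Set (SL2 × SL2)}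
    (hS : ∀ p, φ p ∈ S → p ∈ S) {p : SL2 × SL2} (hp : φ p ∈ closure S) : p ∈ closure S := by
  have : p ∈ φ ⁻¹' closure S := hp
  rw [φ.preimage_closure] at this
  exact closure_mono hS this

lemma Cl.pull (φ : (SL2 × SL2) ≃ₜ (SL2 × SL2)) {S : Set (SL2 × SL2)}
    (hS : ∀ p, φ p ∈ S → p ∈ S) (hE : ∀ p, φ p ∈ Epairs → p ∈ Epairs)
    (hH : ∀ p, p ∈ UHpairs → φ p ∈ UHpairs) {p : SL2 × SL2} (h : Cl S (φ p)) : Cl S p :=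
  ⟨mem_closure_pull φ (fun _ hq => mem_interior_pull φ hS hq) h.1,
    h.2.imp (mem_interior_pull φ hS) fun h' =>
      ⟨mem_closure_pull φ hE h'.1, fun hp => h'.2 (hH p hp)⟩⟩

/-! ### Symmetries -/

/-- Conjugation `A ↦ Q A P` of `SL(2,ℝ)` by an arbitrary invertible matrix `P`, whose
inverse is `Q`. -/
def cj (P Q : M2) (h : P * Q = 1) (A : SL2) : SL2 :=
  ⟨Q * A.1 * P, by
    rw [Matrix.det_mul, Matrix.det_mul, A.2, mul_one, ← Matrix.det_mul,
      _root_.mul_eq_one_comm.1 h, Matrix.det_one]⟩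

lemma cj_mul (P Q : M2) (h : P * Q = 1) (A B : SL2) :
    cj P Q h (A * B) = cj P Q h A * cj P Q h B := by
  ext1
  show (Q * (A.1 * B.1) * P) _ _ = ((Q * A.1 * P) * (Q * B.1 * P)) _ _
  have : (Q * A.1 * P) * (Q * B.1 * P) = Q * A.1 * (P * Q) * B.1 * P := by noncomm_ring
  rw [this, h]; noncomm_ring

lemma cj_one (P Q : M2) (h : P * Q = 1) : cj P Q h 1 = 1 := by
  ext1
  show (Q * 1 * P) _ _ = (1 : M2) _ _
  rw [mul_one, _root_.mul_eq_one_comm.1 h]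

lemma trace_cj (P Q : M2) (h : P * Q = 1) (A : SL2) : trace2 (cj P Q h A) = trace2 A := by
  unfold trace2
  show (Q * A.1 * P).trace = _
  rw [Matrix.trace_mul_comm, ← mul_assoc, h, one_mul]

lemma cj_cj (P Q : M2) (h : P * Q = 1) (h' : Q * P = 1) (A : SL2) :
    cj Q P h' (cj P Q h A) = A := by
  ext1
  show (P * (Q * A.1 * P) * Q) _ _ = _
  have : P * (Q * A.1 * P) * Q = (P * Q) * A.1 * (P * Q) := by noncomm_ring
  rw [this, h]; simp

lemma continuous_cj (P Q : M2) (h : P * Q = 1) : Continuous (cj P Q h) := by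
  rw [continuous_sl2_iff]
  intro i j
  show Continuous fun A : SL2 => (Q * A.1 * P) i j
  simp only [Matrix.mul_apply, Fin.sum_univ_two]
  have := fun i j => continuous_entry i j
  fun_prop

/-- Simultaneous conjugation of both components of a pair. -/
def cjH (P Q : M2) (h : P * Q = 1) : (SL2 × SL2) ≃ₜ (SL2 × SL2) where
  toFun p := (cj P Q h p.1, cj P Q h p.2)
  invFun p := (cj Q P (_root_.mul_eq_one_comm.1 h) p.1, cj Q P (_root_.mul_eq_one_comm.1 h) p.2)
  left_inv p := by simp only [cj_cj]
  right_inv p := by simp only [cj_cj]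
  continuous_toFun := by
    exact ((continuous_cj P Q h).comp continuous_fst).prodMk
      ((continuous_cj P Q h).comp continuous_snd)
  continuous_invFun := by
    exact ((continuous_cj Q P _).comp continuous_fst).prodMk
      ((continuous_cj Q P _).comp continuous_snd)

lemma wp_cjH (P Q : M2) (h : P * Q = 1) (p : SL2 × SL2) (w : List Bool) :
    wp (cjH P Q h p) w = cj P Q h (wp p w) := by
  induction w with
  | nil => rw [wp_nil, wp_nil, cj_one]
  | cons b w ih =>
    rw [wp_cons, wp_cons, cj_mul, ih]
    cases b <;> rfl

lemma E_cjH (P Q : M2) (h : P * Q = 1) (p : SL2 × SL2) (hp : cjH P Q h p ∈ Epairs) :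
    p ∈ Epairs := by
  rw [mem_E_iff] at *
  simpa only [wp_cjH, trace_cj] using hp

lemma UH_cjH (P Q : M2) (h : P * Q = 1) (p : SL2 × SL2) (hp : p ∈ UHpairs) :
    cjH P Q h p ∈ UHpairs := by
  rw [mem_UH_iff] at *
  obtain ⟨C, hC, lam, hl, H⟩ := hp
  have hpos : 0 < en P * en Q + 1 := by nlinarith [en_nonneg P, en_nonneg Q]
  refine ⟨C / (en P * en Q + 1), by positivity, lam, hl, fun w hw => ?_⟩
  rw [wp_cjH]
  have h1 := H w hw
  have h2 : en (wp p w).1 ≤ en P * en (cj P Q h (wp p w)).1 * en Q := by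
    conv_lhs => rw [← cj_cj P Q h (_root_.mul_eq_one_comm.1 h) (wp p w)]
    exact (en_mul _ _).trans (mul_le_mul_of_nonneg_right (en_mul _ _) (en_nonneg _))
  rw [div_mul_eq_mul_div, div_le_iff₀ hpos]
  nlinarith [en_nonneg (cj P Q h (wp p w)).1]

lemma UH_of_cjH (P Q : M2) (h : P * Q = 1) (p : SL2 × SL2) (hp : cjH P Q h p ∈ UHpairs) :
    p ∈ UHpairs := by
  have := UH_cjH Q P (_root_.mul_eq_one_comm.1 h) _ hp
  rwa [show cjH Q P (_root_.mul_eq_one_comm.1 h) (cjH P Q h p) = p from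
    (cjH P Q h).left_inv p] at this

lemma Cl.cj {P Q : M2} (h : P * Q = 1) {p : SL2 × SL2} (hp : Cl UHpairs (cjH P Q h p)) :
    Cl UHpairs p :=
  Cl.pull _ (UH_of_cjH P Q h) (E_cjH P Q h) (UH_cjH P Q h) hp

/-- Exchange of the two matrices. -/
abbrev swapH : (SL2 × SL2) ≃ₜ (SL2 × SL2) := Homeomorph.prodComm SL2 SL2

lemma wp_swap (p : SL2 × SL2) (w : List Bool) : wp (swapH p) w = wp p (w.map not) := by
  induction w with
  | nil => rfl
  | cons b w ih =>
    rw [wp_cons, ih, List.map_cons, wp_cons]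
    cases b <;> rfl

lemma E_swap (p : SL2 × SL2) (hp : swapH p ∈ Epairs) : p ∈ Epairs := by
  rw [mem_E_iff] at *
  obtain ⟨w, hw, h⟩ := hp
  exact ⟨w.map not, by simpa using hw, by rwa [← wp_swap]⟩

lemma UH_swap (p : SL2 × SL2) (hp : p ∈ UHpairs) : swapH p ∈ UHpairs := by
  rw [mem_UH_iff] at *
  obtain ⟨C, hC, lam, hl, H⟩ := hp
  refine ⟨C, hC, lam, hl, fun w hw => ?_⟩
  have := H (w.map not) (by simpa using hw)
  rwa [wp_swap, ← List.length_map (f := not)]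

lemma Cl.swap {S : Set (SL2 × SL2)} (hS : ∀ p, swapH p ∈ S → p ∈ S) {p : SL2 × SL2}
    (hp : Cl S (swapH p)) : Cl S p :=
  Cl.pull _ hS E_swap UH_swap hp

/-- The element `-A` of `SL(2,ℝ)`. -/
def ng (A : SL2) : SL2 := ⟨-A.1, by rw [Matrix.det_neg, A.2]; simp⟩

lemma ng_ng (A : SL2) : ng (ng A) = A := by ext1; simp [ng]

lemma trace_ng (A : SL2) : trace2 (ng A) = -trace2 A := by simp [trace2, ng]

/-- The sign change `(A, B) ↦ (-A, B)`. -/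
def ngH : (SL2 × SL2) ≃ₜ (SL2 × SL2) where
  toFun p := (ng p.1, p.2)
  invFun p := (ng p.1, p.2)
  left_inv p := by simp only [ng_ng]
  right_inv p := by simp only [ng_ng]
  continuous_toFun := by
    refine Continuous.prodMk ?_ continuous_snd
    rw [continuous_sl2_iff]
    exact fun i j => ((continuous_entry i j).comp continuous_fst).neg
  continuous_invFun := by
    refine Continuous.prodMk ?_ continuous_snd
    rw [continuous_sl2_iff]
    exact fun i j => ((continuous_entry i j).comp continuous_fst).neg

lemma wp_ng (p : SL2 × SL2) (w : List Bool) :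
    (wp (ngH p) w).1 = (wp p w).1 ∨ (wp (ngH p) w).1 = -(wp p w).1 := by
  induction w with
  | nil => left; rfl
  | cons b w ih =>
    rw [wp_cons, wp_cons]
    simp only [Matrix.SpecialLinearGroup.coe_mul]
    have e : (ngH p).1.1 = -p.1.1 := rfl
    have e' : (ngH p).2 = p.2 := rfl
    cases b <;> rcases ih with ih | ih <;> rw [ih] <;> simp [e, e']

lemma en_wp_ng (p : SL2 × SL2) (w : List Bool) : en (wp (ngH p) w).1 = en (wp p w).1 := by
  rcases wp_ng p w with h | h <;> rw [h]
  exact en_neg _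

lemma abs_trace_wp_ng (p : SL2 × SL2) (w : List Bool) :
    |trace2 (wp (ngH p) w)| = |trace2 (wp p w)| := by
  unfold trace2
  rcases wp_ng p w with h | h <;> rw [h]
  rw [Matrix.trace_neg, abs_neg]

lemma E_ng (p : SL2 × SL2) : ngH p ∈ Epairs ↔ p ∈ Epairs := by
  simp only [mem_E_iff, abs_trace_wp_ng]

lemma UH_ng (p : SL2 × SL2) : ngH p ∈ UHpairs ↔ p ∈ UHpairs := by
  simp only [mem_UH_iff, en_wp_ng]

lemma Cl.ng {p : SL2 × SL2} (hp : Cl UHpairs (ngH p)) : Cl UHpairs p :=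
  Cl.pull _ (fun p => (UH_ng p).1) (fun p => (E_ng p).1) (fun p => (UH_ng p).2) hp

/-- The map `F₊(A, B) = (A, AB)` as a homeomorphism. -/
def FH : (SL2 × SL2) ≃ₜ (SL2 × SL2) where
  toFun p := (p.1, p.1 * p.2)
  invFun p := (p.1, p.1⁻¹ * p.2)
  left_inv p := by simp
  right_inv p := by simp
  continuous_toFun := continuous_fst.prodMk (continuous_fst.sl2_mul continuous_snd)
  continuous_invFun := continuous_fst.prodMk (continuous_fst.sl2_inv.sl2_mul continuous_snd)

/-- The substitution `A ↦ A`, `B ↦ AB` on words. -/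
def substF (w : List Bool) : List Bool := w.flatMap fun b => if b then [true] else [true, false]

lemma wp_FH (p : SL2 × SL2) (w : List Bool) : wp (FH p) w = wp p (substF w) := by
  induction w with
  | nil => rfl
  | cons b w ih =>
    rw [substF, List.flatMap_cons, wp_append, wp_cons, ih]
    cases b
    · simp [wp, FH, substF]
    · simp [wp, FH, substF]

lemma length_le_sub (w : List Bool) : w.length ≤ (substF w).length := by
  induction w with
  | nil => simp
  | cons b w ih =>
    rw [substF, List.flatMap_cons, List.length_append, ← substF, List.length_cons]
    cases b
    · rw [if_neg (by simp)]; simp only [List.length_cons, List.length_nil]; omega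
    · rw [if_pos rfl]; simp only [List.length_cons, List.length_nil]; omega

lemma sub_ne_nil {w : List Bool} (hw : w ≠ [])  : substF w ≠ [] := by
  have := length_le_sub w
  have := List.length_pos_iff.2 hw
  exact List.length_pos_iff.1 (by omega)

lemma E_FH (p : SL2 × SL2) (hp : FH p ∈ Epairs) : p ∈ Epairs := by
  rw [mem_E_iff] at *
  obtain ⟨w, hw, h⟩ := hp
  exact ⟨substF w, sub_ne_nil hw, by rwa [← wp_FH]⟩

lemma UH_FH (p : SL2 × SL2) (hp : p ∈ UHpairs) : FH p ∈ UHpairs := by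
  rw [mem_UH_iff] at *
  obtain ⟨C, hC, lam, hl, H⟩ := hp
  refine ⟨C, hC, lam, hl, fun w hw => ?_⟩
  have := H (substF w) (sub_ne_nil hw)
  rw [wp_FH]
  refine le_trans ?_ this
  gcongr
  · exact hl.le
  · exact length_le_sub w

lemma Cl.fplus {S : Set (SL2 × SL2)} (hS : ∀ p, FH p ∈ S → p ∈ S) {p : SL2 × SL2}
    (hp : Cl S (FH p)) : Cl S p :=
  Cl.pull _ hS E_FH UH_FH hp

/-! ### Parabolic generators -/

/-- Rotation by the angle `θ`. -/
noncomputable def rot (θ : ℝ) : SL2 := ⟨!![Real.cos θ, -Real.sin θ; Real.sin θ, Real.cos θ], by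
  rw [Matrix.det_fin_two_of]; nlinarith [Real.sin_sq_add_cos_sq θ]⟩

lemma continuous_rot : Continuous rot := by
  rw [continuous_sl2_iff]
  intro i j
  fin_cases i <;> fin_cases j <;> simp [rot] <;> fun_prop

lemma trace_rot_mul (A : SL2) (θ : ℝ) : trace2 (rot θ * A) =
    Real.cos θ * trace2 A + Real.sin θ * (A.1 0 1 - A.1 1 0) := by
  rw [tr_eq, tr_eq, Matrix.SpecialLinearGroup.coe_mul]
  simp [rot, Matrix.mul_apply, Fin.sum_univ_two]
  ring

lemma parabolic_frequently (A : SL2) (h : |trace2 A| = 2) :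
    ∃ᶠ θ in nhds (0:ℝ), |trace2 (rot θ * A)| < 2 := by
  obtain ⟨τ, hτ1, ht⟩ : ∃ τ : ℝ, |τ| = 1 ∧ trace2 A = 2 * τ := by
    rcases (abs_eq (by norm_num : (0:ℝ) ≤ 2)).1 h with h | h
    · exact ⟨1, by norm_num, by rw [h]; norm_num⟩
    · exact ⟨-1, by norm_num, by rw [h]; norm_num⟩
  have hττ : τ * τ = 1 := by rw [← abs_mul_abs_self, hτ1]; norm_num
  set k := τ * (A.1 0 1 - A.1 1 0) with hk
  have hval : ∀ θ, |trace2 (rot θ * A)| = |2 * Real.cos θ + k * Real.sin θ| := fun θ => by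
    have e : |trace2 (rot θ * A)| = |τ * trace2 (rot θ * A)| := by rw [abs_mul, hτ1, one_mul]
    rw [e, trace_rot_mul, ht, hk]
    congr 1
    linear_combination 2 * Real.cos θ * hττ
  have hlow : ∀ᶠ θ in nhds (0:ℝ), -2 < 2 * Real.cos θ + k * Real.sin θ := by
    have hc : Continuous fun θ => 2 * Real.cos θ + k * Real.sin θ := by fun_prop
    exact (hc.tendsto 0).eventually (lt_mem_nhds (by simp))
  have hcos : ∀ θ, Real.sin θ ≠ 0 → Real.cos θ < 1 := fun θ hθ => by
    nlinarith [Real.sin_sq_add_cos_sq θ, sq_pos_of_ne_zero hθ, Real.cos_le_one θ,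
      Real.neg_one_le_cos θ]
  simp only [hval, abs_lt]
  -- The sign of `θ` is chosen so that the linear term `k sin θ` does not increase the trace.
  rcases le_total k 0 with hk0 | hk0
  · have : ∀ᶠ θ in nhdsWithin (0:ℝ) (Set.Ioi 0), 0 < Real.sin θ := by
      filter_upwards [Ioo_mem_nhdsGT (show (0:ℝ) < 1 by norm_num)] with θ hθ
      exact Real.sin_pos_of_pos_of_lt_pi hθ.1 (by linarith [hθ.2, Real.pi_gt_three])
    refine Filter.Frequently.filter_mono (Filter.Eventually.frequently ?_)
      (nhdsWithin_le_nhds (s := Set.Ioi 0))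
    filter_upwards [this, hlow.filter_mono nhdsWithin_le_nhds] with θ h1 h2
    exact ⟨h2, by nlinarith [hcos θ h1.ne']⟩
  · have : ∀ᶠ θ in nhdsWithin (0:ℝ) (Set.Iio 0), Real.sin θ < 0 := by
      filter_upwards [Ioo_mem_nhdsLT (show (-1:ℝ) < 0 by norm_num)] with θ hθ
      exact Real.sin_neg_of_neg_of_neg_pi_lt hθ.2 (by linarith [hθ.1, Real.pi_gt_three])
    refine Filter.Frequently.filter_mono (Filter.Eventually.frequently ?_)
      (nhdsWithin_le_nhds (s := Set.Iio 0))
    filter_upwards [this, hlow.filter_mono nhdsWithin_le_nhds] with θ h1 h2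
    exact ⟨h2, by nlinarith [hcos θ h1.ne]⟩

/-- A matrix of trace `±2` becomes elliptic after multiplication by a small rotation. -/
lemma mem_closure_E_of_fst {p : SL2 × SL2} (h : |trace2 p.1| = 2) : p ∈ closure Epairs := by
  have hc : Continuous fun θ => (rot θ * p.1, p.2) :=
    (continuous_rot.sl2_mul continuous_const).prodMk continuous_const
  have h0 : (rot 0 * p.1, p.2) = p := by
    have : rot 0 = 1 := by
      ext i j
      fin_cases i <;> fin_cases j <;> simp [rot]
    rw [this, one_mul]
  have ht := hc.tendsto 0
  rw [h0] at ht
  refine mem_closure_iff_frequently.2 (ht.frequently ((parabolic_frequently p.1 h).mono ?_))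
  intro θ hθ
  rw [mem_E_iff]
  exact ⟨[true], by simp, by simpa [wp] using hθ⟩

lemma Cl_part_of_parabolic {p : SL2 × SL2}
    (h : |trace2 p.1| = 2 ∨ |trace2 p.2| = 2 ∨ |trace2 (p.1 * p.2)| = 2) :
    p ∈ closure Epairs ∧ p ∉ UHpairs := by
  have hsnd : ∀ q : SL2 × SL2, |trace2 q.2| = 2 → q ∈ closure Epairs ∧ q ∉ UHpairs := fun q hq =>
    ⟨mem_closure_pull swapH E_swap (mem_closure_E_of_fst (p := swapH q) hq),
      not_UH_of_parabolic false (by simpa using hq)⟩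
  rcases h with h | h | h
  · exact ⟨mem_closure_E_of_fst h, not_UH_of_parabolic true (by simpa using h)⟩
  · exact hsnd p h
  · obtain ⟨h1, h2⟩ := hsnd (FH p) h
    exact ⟨mem_closure_pull FH E_FH h1, fun hp => h2 (UH_FH p hp)⟩

/-! ### Growth along the free group -/

/-- The homomorphism from the free group on two letters determined by a pair. -/
def gl (p : SL2 × SL2) : FreeGroup Bool →* SL2 := FreeGroup.lift fun b => if b then p.1 else p.2

/-- Pairs such that the norm grows exponentially along the whole free group. Contrary to `UHpairs`,
this set contains a pair as soon as it contains its image under `F₊`, which generates a smaller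
semigroup but the same group. -/
def GH : Set (SL2 × SL2) := {p | ∃ C > (0:ℝ), ∃ lam > (1:ℝ), ∀ g : FreeGroup Bool,
  C * lam ^ g.norm ≤ en (gl p g).1}

lemma GH_subset_UH : GH ⊆ UHpairs := by
  rintro p ⟨C, hC, lam, hl, H⟩
  rw [mem_UH_iff]
  refine ⟨C, hC, lam, hl, fun w _ => ?_⟩
  have h1 := H (FreeGroup.mk (w.map fun b => (b, true)))
  have hred : FreeGroup.IsReduced (w.map fun b => (b, true)) := by
    clear h1
    unfold FreeGroup.IsReduced
    rw [List.isChain_map]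
    induction w with
    | nil => simp
    | cons b w ih =>
      cases w with
      | nil => simp
      | cons c w => exact List.isChain_cons_cons.2 ⟨fun _ => rfl, ih (by simp)⟩
  rw [FreeGroup.norm, FreeGroup.toWord_mk, hred.reduce_eq, List.length_map] at h1
  convert h1 using 3
  simp [gl, wp, Function.comp_def]

lemma norm_hom_le (θ : FreeGroup Bool →* FreeGroup Bool)
    (hθ : ∀ b, (θ (FreeGroup.of b)).norm ≤ 2) (g : FreeGroup Bool) :
    (θ g).norm ≤ 2 * g.norm := by
  have key : ∀ L : List (Bool × Bool), (θ (FreeGroup.mk L)).norm ≤ 2 * L.length := by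
    intro L
    induction L with
    | nil => simp [← FreeGroup.one_eq_mk]
    | cons x L ih =>
      have e : FreeGroup.mk (x :: L) = FreeGroup.mk [x] * FreeGroup.mk L := by simp
      have h1 : (θ (FreeGroup.mk [x])).norm ≤ 2 := by
        obtain ⟨b, s⟩ := x
        cases s
        · have : FreeGroup.mk [(b, false)] = (FreeGroup.of b)⁻¹ := rfl
          rw [this, map_inv, FreeGroup.norm_inv_eq]; exact hθ b
        · exact hθ b
      rw [e, map_mul, List.length_cons]
      have := FreeGroup.norm_mul_le (θ (FreeGroup.mk [x])) (θ (FreeGroup.mk L))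
      omega
  have := key g.toWord
  rwa [FreeGroup.mk_toWord] at this

/-- Exponential growth along the free group does not depend on the choice of a basis. -/
lemma GH_of_change {p q : SL2 × SL2} (ψ θ : FreeGroup Bool →* FreeGroup Bool)
    (hψ : ∀ g, θ (ψ g) = g) (hθ : ∀ b, (θ (FreeGroup.of b)).norm ≤ 2)
    (hpq : ∀ g, gl p g = gl q (ψ g)) (hq : q ∈ GH) : p ∈ GH := by
  obtain ⟨C, hC, lam, hl, H⟩ := hq
  refine ⟨C, hC, √lam, by rw [gt_iff_lt, Real.lt_sqrt] <;> linarith, fun g => ?_⟩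
  rw [hpq]
  refine le_trans ?_ (H (ψ g))
  have h1 := norm_hom_le θ hθ (ψ g)
  rw [hψ] at h1
  have h2 : √lam ^ (2 * (ψ g).norm) = lam ^ (ψ g).norm := by
    rw [pow_mul, Real.sq_sqrt (by linarith)]
  rw [← h2]
  have : 1 ≤ √lam := by rw [Real.le_sqrt] <;> linarith
  gcongr

lemma GH_FH (p : SL2 × SL2) (hp : FH p ∈ GH) : p ∈ GH := by
  let ψ : FreeGroup Bool →* FreeGroup Bool :=
    FreeGroup.lift fun b => if b then .of true else (.of true)⁻¹ * .of false
  let θ : FreeGroup Bool →* FreeGroup Bool :=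
    FreeGroup.lift fun b => if b then .of true else .of true * .of false
  have h1 : θ.comp ψ = MonoidHom.id _ := by
    refine FreeGroup.ext_hom _ _ fun b => ?_
    cases b <;> simp [ψ, θ]
  have h2 : gl p = (gl (FH p)).comp ψ := by
    refine FreeGroup.ext_hom _ _ fun b => ?_
    cases b <;> simp [gl, FH, ψ]
  refine GH_of_change ψ θ (fun g => DFunLike.congr_fun h1 g) ?_
    (fun g => DFunLike.congr_fun h2 g) hp
  intro b
  cases b
  · simpa [θ] using FreeGroup.norm_mul_le (FreeGroup.of true) (FreeGroup.of false)
  · simp [θ]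

lemma GH_swap (p : SL2 × SL2) (hp : swapH p ∈ GH) : p ∈ GH := by
  let ψ : FreeGroup Bool →* FreeGroup Bool := FreeGroup.lift fun b => .of (!b)
  have h1 : ψ.comp ψ = MonoidHom.id _ := by
    refine FreeGroup.ext_hom _ _ fun b => ?_
    cases b <;> simp [ψ]
  have h2 : gl p = (gl (swapH p)).comp ψ := by
    refine FreeGroup.ext_hom _ _ fun b => ?_
    cases b <;> simp [gl, ψ]
  refine GH_of_change ψ ψ (fun g => DFunLike.congr_fun h1 g) ?_
    (fun g => DFunLike.congr_fun h2 g) hp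
  intro b
  cases b <;> simp [ψ]

/-! ### Three reflections -/

/-- `X` is a combination of `u, v, w` with coefficients between `0` and that of `u`, which is
at least `N`. -/
def Dom (u v w : M2) (N : ℝ) (X : M2) : Prop :=
  ∃ a b c : ℝ, 0 ≤ b ∧ 0 ≤ c ∧ b ≤ a ∧ c ≤ a ∧ N ≤ a ∧ X = a • u + b • v + c • w

lemma Dom.symm {u v w : M2} {N : ℝ} {X : M2} (h : Dom u v w N X) : Dom u w v N X := by
  obtain ⟨a, b, c, h1, h2, h3, h4, h5, h6⟩ := h
  exact ⟨a, c, b, h2, h1, h4, h3, h5, by rw [h6]; abel⟩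

lemma Dom.mono {u v w : M2} {N N' : ℝ} {X : M2} (h : Dom u v w N X) (hN : N' ≤ N) :
    Dom u v w N' X := by
  obtain ⟨a, b, c, h1, h2, h3, h4, h5, h6⟩ := h
  exact ⟨a, b, c, h1, h2, h3, h4, by linarith, h6⟩

/-- On traceless matrices with the Lorentzian form `tr (X Y) / 2`, whose unit vectors are the
traceless involutions, this says that the scalar product of `u` and `v` is `-r ≤ -m`. -/
def RefRel (m : ℝ) (u v : M2) : Prop := ∃ r ≥ m, u * v + v * u = (-2 * r) • (1 : M2)

lemma RefRel.symm {m : ℝ} {u v : M2} (h : RefRel m u v) : RefRel m v u := by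
  obtain ⟨r, hr, h⟩ := h
  exact ⟨r, hr, by rw [add_comm, h]⟩

lemma sandwich {r : ℝ} {u v : M2} (hv : v * v = 1) (h : u * v + v * u = (-2 * r) • (1 : M2)) :
    v * u * v = (-2 * r) • v - u := by
  have h1 : (u * v + v * u) * v = (-2 * r) • v := by rw [h, smul_mul_assoc, one_mul]
  rw [add_mul, mul_assoc u, hv, mul_one] at h1
  rw [← h1]; abel

/-- The reflection in `v` expands the dominant coefficient and makes `v` dominant. -/
lemma Dom.step {m : ℝ} (hm : 1 ≤ m) {u v w : M2} {N : ℝ} {X : M2} (hX : Dom u v w N X)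
    (hv : v * v = 1) (huv : RefRel m u v) (hvw : RefRel m w v) :
    Dom v u w ((2 * m - 1) * N) (-(v * X * v)) := by
  obtain ⟨a, b, c, h1, h2, h3, h4, h5, rfl⟩ := hX
  obtain ⟨r, hr, huv⟩ := huv
  obtain ⟨s, hs, hvw⟩ := hvw
  have ha : 0 ≤ a := h1.trans h3
  have hra : a ≤ r * a := by nlinarith
  have hsc : 0 ≤ s * c := mul_nonneg (by linarith) h2
  refine ⟨2 * r * a + 2 * s * c - b, a, c, ha, h2, by nlinarith, by nlinarith, ?_, ?_⟩
  · nlinarith [mul_le_mul_of_nonneg_left h5 (by linarith : (0:ℝ) ≤ 2 * m - 1),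
      mul_le_mul_of_nonneg_right hr ha]
  · have e : v * (a • u + b • v + c • w) * v
        = a • (v * u * v) + b • (v * v * v) + c • (v * w * v) := by
      simp only [mul_add, add_mul, mul_smul_comm, smul_mul_assoc]
    rw [e, sandwich hv huv, sandwich hv hvw, hv, one_mul]
    module

/-- The norm of a dominated combination is at least a multiple of its dominant coefficient, as is
seen from its scalar product with `v`. -/
lemma Dom.bound {m : ℝ} (hm : 1 ≤ m) {u v w : M2} {N : ℝ} {X : M2} (hX : Dom u v w N X)
    (hv : v * v = 1) (huv : RefRel m u v) (hvw : RefRel m w v) :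
    2 * (m - 1) * N ≤ en X * en v := by
  obtain ⟨a, b, c, h1, h2, h3, h4, h5, rfl⟩ := hX
  obtain ⟨r, hr, huv⟩ := huv
  obtain ⟨s, hs, hvw⟩ := hvw
  have tr1 : ∀ (x : M2) (t : ℝ), x * v + v * x = (-2 * t) • (1 : M2) →
      (x * v).trace = -2 * t := fun x t h => by
    have := congrArg Matrix.trace h
    rw [Matrix.trace_add, Matrix.trace_mul_comm v x, Matrix.trace_smul, Matrix.trace_one] at this
    simp at this
    linarith
  have e : ((a • u + b • v + c • w) * v).trace = -2 * r * a + 2 * b - 2 * s * c := by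
    simp only [add_mul, smul_mul_assoc, Matrix.trace_add, Matrix.trace_smul, tr1 u r huv,
      tr1 w s hvw, hv, Matrix.trace_one, smul_eq_mul, Fintype.card_fin]
    push_cast; ring
  have h6 := (abs_trace_le_en _).trans (en_mul (a • u + b • v + c • w) v)
  rw [e] at h6
  have h7 := neg_abs_le (-2 * r * a + 2 * b - 2 * s * c)
  have ha : 0 ≤ a := h1.trans h3
  have hsc : 0 ≤ s * c := mul_nonneg (by linarith) h2
  nlinarith [mul_le_mul_of_nonneg_left h5 (by linarith : (0:ℝ) ≤ m - 1),
      mul_le_mul_of_nonneg_right hr ha]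

/-- Minus the conjugation by an involution `v`: the reflection `v ↦ -v` of the space of traceless
matrices. -/
def sg (v X : M2) : M2 := -(v * X * v)

lemma sg_sg {v : M2} (hv : v * v = 1) (X : M2) : sg v (sg v X) = X := by
  have : sg v (sg v X) = (v * v) * X * (v * v) := by unfold sg; noncomm_ring
  rw [this, hv]; simp

/-- The dominance properties, depending on the first letter of the word, of the images of the
base vector under reduced words. A letter is `(b, s)` as in `FreeGroup Bool`: `b` selects the first
or the second generator, and `s = false` stands for its inverse. -/
def WInv (v1 v2 v3 : M2) (N : ℝ) (X : M2) : Bool × Bool → Prop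
  | (true, true) => Dom v1 v2 v3 N X
  | (false, true) => Dom v2 v1 v3 N X ∧ Dom v3 v1 v2 N (sg v2 X)
  | (true, false) => Dom v2 v1 v3 N X ∧ Dom v1 v2 v3 N (sg v2 X)
  | (false, false) => Dom v3 v1 v2 N X

/-- The action of a letter, written as a product of two reflections. -/
def act (v1 v2 v3 : M2) (X : M2) : Bool × Bool → M2
  | (true, true) => sg v1 (sg v2 X)
  | (false, true) => sg v2 (sg v3 X)
  | (true, false) => sg v2 (sg v1 X)
  | (false, false) => sg v3 (sg v2 X)

/-- Ping-pong: a letter that does not cancel the one after it applies two reflections; either both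
expand, or the first undoes the last reflection applied so far and the second expands. -/
lemma act_step {m : ℝ} {v1 v2 v3 : M2} (hm : 1 < m)
    (s1 : v1 * v1 = 1) (s2 : v2 * v2 = 1) (s3 : v3 * v3 = 1)
    (r12 : RefRel m v1 v2) (r23 : RefRel m v2 v3) (r13 : RefRel m v1 v3)
    (x y : Bool × Bool) (hxy : x.1 = y.1 → x.2 = y.2) {N : ℝ} (hN : 0 ≤ N) {X : M2}
    (hX : WInv v1 v2 v3 N X y ∨ (Dom v1 v2 v3 N X ∧ Dom v2 v1 v3 N X ∧ Dom v3 v1 v2 N X)) :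
    WInv v1 v2 v3 ((2 * m - 1) * N) (act v1 v2 v3 X x) x := by
  have d12 : ∀ {N X}, Dom v1 v2 v3 N X → Dom v2 v1 v3 ((2 * m - 1) * N) (sg v2 X) :=
    fun h => h.step hm.le s2 r12 r23.symm
  have d13 : ∀ {N X}, Dom v1 v2 v3 N X → Dom v3 v1 v2 ((2 * m - 1) * N) (sg v3 X) :=
    fun h => h.symm.step hm.le s3 r13 r23
  have d21 : ∀ {N X}, Dom v2 v1 v3 N X → Dom v1 v2 v3 ((2 * m - 1) * N) (sg v1 X) :=
    fun h => h.step hm.le s1 r12.symm r13.symm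
  have d23 : ∀ {N X}, Dom v2 v1 v3 N X → Dom v3 v1 v2 ((2 * m - 1) * N) (sg v3 X) :=
    fun h => (h.symm.step hm.le s3 r23 r13).symm
  have d31 : ∀ {N X}, Dom v3 v1 v2 N X → Dom v1 v2 v3 ((2 * m - 1) * N) (sg v1 X) :=
    fun h => (h.step hm.le s1 r13.symm r12.symm).symm
  have d32 : ∀ {N X}, Dom v3 v1 v2 N X → Dom v2 v1 v3 ((2 * m - 1) * N) (sg v2 X) :=
    fun h => (h.symm.step hm.le s2 r23.symm r12).symm
  have le1 : (2 * m - 1) * N ≤ (2 * m - 1) * ((2 * m - 1) * N) := by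
    have : 0 ≤ (2 * m - 1) * N := mul_nonneg (by linarith) hN
    nlinarith
  have cA : (Dom v1 v2 v3 N X ∨ Dom v3 v1 v2 N X ∨ Dom v3 v1 v2 N (sg v2 X)) →
      WInv v1 v2 v3 ((2 * m - 1) * N) (act v1 v2 v3 X (true, true)) (true, true) := by
    rintro (h | h | h)
    · exact (d21 (d12 h)).mono le1
    · exact (d21 (d32 h)).mono le1
    · exact d31 h
  have cB : (Dom v1 v2 v3 N X ∨ Dom v2 v1 v3 N X) →
      WInv v1 v2 v3 ((2 * m - 1) * N) (act v1 v2 v3 X (false, true)) (false, true) := by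
    intro h
    have h' : Dom v3 v1 v2 ((2 * m - 1) * N) (sg v3 X) := h.elim d13 d23
    refine ⟨(d32 h').mono le1, ?_⟩
    simpa only [act, sg_sg s2] using h'
  have ca : (Dom v2 v1 v3 N X ∨ Dom v3 v1 v2 N X) →
      WInv v1 v2 v3 ((2 * m - 1) * N) (act v1 v2 v3 X (true, false)) (true, false) := by
    intro h
    have h' : Dom v1 v2 v3 ((2 * m - 1) * N) (sg v1 X) := h.elim d21 d31
    refine ⟨(d12 h').mono le1, ?_⟩
    simpa only [act, sg_sg s2] using h'
  have cb : (Dom v3 v1 v2 N X ∨ Dom v1 v2 v3 N X ∨ Dom v1 v2 v3 N (sg v2 X)) →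
      WInv v1 v2 v3 ((2 * m - 1) * N) (act v1 v2 v3 X (false, false)) (false, false) := by
    rintro (h | h | h)
    · exact (d23 (d32 h)).mono le1
    · exact (d23 (d12 h)).mono le1
    · exact d13 h
  rcases hX with hX | ⟨h1, h2, h3⟩
  · obtain ⟨x, s⟩ := x
    obtain ⟨y, t⟩ := y
    have no : ∀ {P : Prop}, true = false → P := fun h => (Bool.false_ne_true h.symm).elim
    cases x <;> cases s <;> cases y <;> cases t
    exacts [cb (.inl hX), no (hxy rfl).symm, cb (.inr (.inr hX.2)), cb (.inr (.inl hX)),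
      no (hxy rfl), cB (.inr hX.1), cB (.inr hX.1), cB (.inl hX),
      ca (.inr hX), ca (.inl hX.1), ca (.inl hX.1), no (hxy rfl).symm,
      cA (.inr (.inl hX)), cA (.inr (.inr hX.2)), no (hxy rfl), cA (.inl hX)]
  · obtain ⟨x, s⟩ := x
    cases x <;> cases s
    exacts [cb (.inl h3), cB (.inl h1), ca (.inl h2), cA (.inl h1)]

lemma inv_word {m : ℝ} {v1 v2 v3 : M2} (hm : 1 < m)
    (s1 : v1 * v1 = 1) (s2 : v2 * v2 = 1) (s3 : v3 * v3 = 1)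
    (r12 : RefRel m v1 v2) (r23 : RefRel m v2 v3) (r13 : RefRel m v1 v3)
    (L : List (Bool × Bool)) (hL : FreeGroup.IsReduced L) (X0 : M2)
    (h1 : Dom v1 v2 v3 1 X0) (h2 : Dom v2 v1 v3 1 X0) (h3 : Dom v3 v1 v2 1 X0) :
    match L with
    | [] => True
    | x :: _ => WInv v1 v2 v3 ((2 * m - 1) ^ L.length)
        (L.foldr (fun x X => act v1 v2 v3 X x) X0) x := by
  induction L with
  | nil => trivial
  | cons x L ih =>
    have hpos : 0 ≤ (2 * m - 1) ^ L.length := pow_nonneg (by linarith) _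
    cases L with
    | nil =>
      have := act_step hm s1 s2 s3 r12 r23 r13 x x (fun _ => rfl) zero_le_one
        (Or.inr ⟨h1, h2, h3⟩)
      simpa using this
    | cons y L =>
      have hxy := FreeGroup.isReduced_cons_cons.1 hL
      have := act_step hm s1 s2 s3 r12 r23 r13 x y hxy.1 hpos (Or.inl (ih hxy.2))
      rw [← pow_succ'] at this
      exact this

/-- Two products of three reflections in vectors with pairwise scalar products less than `-1`: the
adjoint action of a reduced word expands `v1 + v2 + v3` exponentially, and the adjoint action is
quadratic in the matrix. -/
lemma GH_of_reflections {m : ℝ} {v1 v2 v3 : M2} (hm : 1 < m)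
    (s1 : v1 * v1 = 1) (s2 : v2 * v2 = 1) (s3 : v3 * v3 = 1)
    (r12 : RefRel m v1 v2) (r23 : RefRel m v2 v3) (r13 : RefRel m v1 v3)
    (p : SL2 × SL2) (hA : p.1.1 = -(v1 * v2)) (hB : p.2.1 = -(v2 * v3)) :
    p ∈ GH := by
  set X0 : M2 := v1 + v2 + v3 with hX0
  have h1 : Dom v1 v2 v3 1 X0 := ⟨1, 1, 1, by norm_num, by norm_num, le_rfl, le_rfl, le_rfl, by
    simp [hX0]⟩
  have h2 : Dom v2 v1 v3 1 X0 := ⟨1, 1, 1, by norm_num, by norm_num, le_rfl, le_rfl, le_rfl, by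
    simp [hX0]; abel⟩
  have h3 : Dom v3 v1 v2 1 X0 := ⟨1, 1, 1, by norm_num, by norm_num, le_rfl, le_rfl, le_rfl, by
    simp [hX0]; abel⟩
  have hA' : p.1⁻¹.1 = -(v2 * v1) := by
    have e : p.1.1 * -(v2 * v1) = 1 := by
      rw [hA, show -(v1 * v2) * -(v2 * v1) = v1 * (v2 * v2) * v1 by noncomm_ring, s2, mul_one, s1]
    have e' : p.1⁻¹.1 * p.1.1 = 1 := by
      rw [← Matrix.SpecialLinearGroup.coe_mul, inv_mul_cancel]; rfl
    exact left_inv_eq_right_inv e' e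
  have hB' : p.2⁻¹.1 = -(v3 * v2) := by
    have e : p.2.1 * -(v3 * v2) = 1 := by
      rw [hB, show -(v2 * v3) * -(v3 * v2) = v2 * (v3 * v3) * v2 by noncomm_ring, s3, mul_one, s2]
    have e' : p.2⁻¹.1 * p.2.1 = 1 := by
      rw [← Matrix.SpecialLinearGroup.coe_mul, inv_mul_cancel]; rfl
    exact left_inv_eq_right_inv e' e
  have hact : ∀ L : List (Bool × Bool), L.foldr (fun x X => act v1 v2 v3 X x) X0
      = (gl p (FreeGroup.mk L)).1 * X0 * (gl p (FreeGroup.mk L))⁻¹.1 := by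
    intro L
    induction L with
    | nil =>
      rw [← FreeGroup.one_eq_mk, map_one, inv_one]
      simp
    | cons x L ih =>
      have e : FreeGroup.mk (x :: L) = FreeGroup.mk [x] * FreeGroup.mk L := by simp
      rw [List.foldr_cons, ih, e, map_mul, _root_.mul_inv_rev]
      simp only [Matrix.SpecialLinearGroup.coe_mul]
      set M := (gl p (FreeGroup.mk L)).1
      set M' := (gl p (FreeGroup.mk L))⁻¹.1
      obtain ⟨b, s⟩ := x
      have e1 : gl p (FreeGroup.mk [(b, s)]) =
          if s then (if b then p.1 else p.2) else (if b then p.1 else p.2)⁻¹ := by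
        cases s <;> simp [gl]
      rw [e1]
      cases b <;> cases s <;> simp [hA, hB, hA', hB', act, sg, -Matrix.SpecialLinearGroup.coe_inv] <;>
        noncomm_ring
  set K := en v1 + en v2 + en v3 with hK
  have n1 := en_nonneg v1
  have n2 := en_nonneg v2
  have n3 := en_nonneg v3
  have bound : ∀ L : List (Bool × Bool), FreeGroup.IsReduced L →
      2 * (m - 1) * (2 * m - 1) ^ L.length
        ≤ en (L.foldr (fun x X => act v1 v2 v3 X x) X0) * K := by
    intro L hL
    have key : ∀ {N X}, (Dom v1 v2 v3 N X ∨ Dom v2 v1 v3 N X ∨ Dom v3 v1 v2 N X) →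
        2 * (m - 1) * N ≤ en X * K := by
      rintro N X (h | h | h)
      · exact (h.bound hm.le s2 r12 r23.symm).trans
          (mul_le_mul_of_nonneg_left (by linarith) (en_nonneg _))
      · exact (h.bound hm.le s1 r12.symm r13.symm).trans
          (mul_le_mul_of_nonneg_left (by linarith) (en_nonneg _))
      · exact (h.bound hm.le s1 r13.symm r12.symm).trans
          (mul_le_mul_of_nonneg_left (by linarith) (en_nonneg _))
    have hi := inv_word hm s1 s2 s3 r12 r23 r13 L hL X0 h1 h2 h3
    apply key
    cases L with
    | nil => left; simpa using h1
    | cons x L =>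
      obtain ⟨b, s⟩ := x
      cases b <;> cases s <;> simp only [WInv] at hi <;> tauto
  have hK0 : 0 ≤ en X0 * K := mul_nonneg (en_nonneg _) (by linarith)
  refine ⟨√(2 * (m - 1) / (en X0 * K + 1)), Real.sqrt_pos.2 (div_pos (by linarith) (by linarith)),
    √(2 * m - 1), by rw [gt_iff_lt, Real.lt_sqrt] <;> linarith, fun g => ?_⟩
  have hb := bound g.toWord FreeGroup.isReduced_toWord
  rw [hact, FreeGroup.mk_toWord] at hb
  have hle : en ((gl p g).1 * X0 * (gl p g)⁻¹.1) ≤ en (gl p g).1 * en X0 * en (gl p g).1 := by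
    refine (en_mul _ _).trans ?_
    rw [en_inv]
    exact mul_le_mul_of_nonneg_right (en_mul _ _) (en_nonneg _)
  refine le_of_sq_le_sq ?_ (en_nonneg _)
  rw [mul_pow, Real.sq_sqrt (div_nonneg (by linarith) (by linarith)), ← pow_mul, mul_comm g.norm,
    pow_mul, Real.sq_sqrt (by linarith), div_mul_eq_mul_div, div_le_iff₀ (by linarith)]
  have := mul_le_mul_of_nonneg_right hle (by linarith : 0 ≤ K)
  show 2 * (m - 1) * (2 * m - 1) ^ g.toWord.length ≤ _
  nlinarith [sq_nonneg (en (gl p g).1)]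

/-! ### The strict free cone -/

lemma sq_of_traceless {M : M2} (h : M.trace = 0) : M * M = (-M.det) • (1 : M2) := by
  rw [Matrix.trace_fin_two] at h
  have h' : M 1 1 = -M 0 0 := by linarith
  rw [Matrix.det_fin_two]
  ext i j
  fin_cases i <;> fin_cases j <;> simp [Matrix.mul_apply, Fin.sum_univ_two, h'] <;> ring

lemma anticomm_of_traceless {M N : M2} (h : M.trace = 0) (hN : N.trace = 0) :
    M * N + N * M = (M * N).trace • (1 : M2) := by
  rw [Matrix.trace_fin_two] at h hN
  have h' : M 1 1 = -M 0 0 := by linarith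
  have hN' : N 1 1 = -N 0 0 := by linarith
  ext i j
  fin_cases i <;> fin_cases j <;>
    simp [Matrix.mul_apply, Fin.sum_univ_two, h', hN', Matrix.trace_fin_two] <;> ring

/-- The trace of the commutator of `A` and `B`, minus `2`, in terms of the traces of `A`, `B`
and `AB`. -/
def kap (x y z : ℝ) : ℝ := x ^ 2 + y ^ 2 + z ^ 2 - x * y * z - 4

lemma det_comm (A B : SL2) : (A.1 * B.1 - B.1 * A.1).det =
    -kap (trace2 A) (trace2 B) (trace2 (A * B)) := by
  have hA := det_eq A
  have hB := det_eq B
  rw [tr_eq, tr_eq, tr_eq, Matrix.det_fin_two, kap, Matrix.SpecialLinearGroup.coe_mul]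
  simp only [Matrix.sub_apply, Matrix.mul_apply, Fin.sum_univ_two]
  generalize A.1 0 0 = a at *
  generalize A.1 0 1 = b at *
  generalize A.1 1 0 = c at *
  generalize A.1 1 1 = d at *
  generalize B.1 0 0 = e at *
  generalize B.1 0 1 = f at *
  generalize B.1 1 0 = g at *
  generalize B.1 1 1 = h at *
  linear_combination (4 * (e * h - f * g) - (e + h) ^ 2) * hA + (4 - (a + d) ^ 2) * hB

/-- Pairs in the strict free cone. -/
def Hs : Set (SL2 × SL2) := {p | 2 < trace2 p.1 ∧ 2 < trace2 p.2 ∧ trace2 (p.1 * p.2) < -2}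

/-- The normalized commutator `R` of `A` and `B` is a traceless involution, as are `A R` and `R B`,
so that `A = -(A R)(-R)` and `B = -(-R)(R B)` are products of reflections; the scalar products are
given by the traces of `A`, `B` and `A B`. -/
lemma Hs_subset_GH : Hs ⊆ GH := by
  rintro ⟨A, B⟩ ⟨hx, hy, hz⟩
  dsimp only at hx hy hz
  have hk : 0 < kap (trace2 A) (trace2 B) (trace2 (A * B)) := by
    have : 0 < trace2 A * trace2 B * (-trace2 (A * B)) := by
      have : 0 < -trace2 (A * B) := by linarith
      positivity
    unfold kap
    nlinarith
  have hdet := det_comm A B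
  set s := √(kap (trace2 A) (trace2 B) (trace2 (A * B))) with hs
  have hs0 : 0 < s := Real.sqrt_pos.2 hk
  have hss : s * s = kap (trace2 A) (trace2 B) (trace2 (A * B)) := Real.mul_self_sqrt hk.le
  rw [← hss] at hdet
  set D := A.1 * B.1 - B.1 * A.1 with hD
  have hAd : A.1.det = 1 := A.2
  have hBd : B.1.det = 1 := B.2
  have tD : D.trace = 0 := by rw [hD, Matrix.trace_sub, Matrix.trace_mul_comm, sub_self]
  have tAD : (A.1 * D).trace = 0 := by
    rw [hD, mul_sub, Matrix.trace_sub, ← mul_assoc, Matrix.trace_mul_comm A.1 (B.1 * A.1),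
      Matrix.trace_mul_comm (A.1 * A.1), ← mul_assoc, sub_self]
  have tDB : (D * B.1).trace = 0 := by
    rw [hD, sub_mul, Matrix.trace_sub, Matrix.trace_mul_comm (A.1 * B.1), ← mul_assoc, sub_self]
  set R := s⁻¹ • D with hR
  have tR : R.trace = 0 := by rw [hR, Matrix.trace_smul, tD, smul_zero]
  have tAR : (A.1 * R).trace = 0 := by rw [hR, mul_smul_comm, Matrix.trace_smul, tAD, smul_zero]
  have tRB : (R * B.1).trace = 0 := by rw [hR, smul_mul_assoc, Matrix.trace_smul, tDB, smul_zero]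
  have dR : R.det = -1 := by
    rw [hR, Matrix.det_smul, hdet, Fintype.card_fin]
    field_simp
  have sR : R * R = 1 := by rw [sq_of_traceless tR, dR]; simp
  have s1 : (A.1 * R) * (A.1 * R) = 1 := by
    rw [sq_of_traceless tAR, Matrix.det_mul, dR, hAd]; simp
  have s3 : (R * B.1) * (R * B.1) = 1 := by
    rw [sq_of_traceless tRB, Matrix.det_mul, dR, hBd]; simp
  have hA : A.1 = -((A.1 * R) * (-R)) := by
    rw [show -((A.1 * R) * (-R)) = A.1 * (R * R) by noncomm_ring, sR, mul_one]
  have hB : B.1 = -((-R) * (R * B.1)) := by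
    rw [show -((-R) * (R * B.1)) = (R * R) * B.1 by noncomm_ring, sR, one_mul]
  refine GH_of_reflections (m := min (trace2 A / 2) (min (trace2 B / 2) (-trace2 (A * B) / 2)))
    (v1 := A.1 * R) (v2 := -R) (v3 := R * B.1) ?_ s1 (by simpa using sR) s3 ?_ ?_ ?_ (A, B) hA hB
  · refine lt_min ?_ (lt_min ?_ ?_) <;> linarith
  · refine ⟨trace2 A / 2, min_le_left _ _, ?_⟩
    rw [anticomm_of_traceless tAR (by rw [Matrix.trace_neg, tR, neg_zero])]
    congr 1
    rw [← neg_neg (A.1 * R * -R), ← hA, Matrix.trace_neg]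
    unfold trace2; ring
  · refine ⟨trace2 B / 2, (min_le_right _ _).trans (min_le_left _ _), ?_⟩
    rw [anticomm_of_traceless (by rw [Matrix.trace_neg, tR, neg_zero]) tRB]
    congr 1
    rw [← neg_neg (-R * (R * B.1)), ← hB, Matrix.trace_neg]
    unfold trace2; ring
  · refine ⟨-trace2 (A * B) / 2, (min_le_right _ _).trans (min_le_right _ _), ?_⟩
    rw [anticomm_of_traceless tAR tRB]
    congr 1
    rw [show A.1 * R * (R * B.1) = A.1 * (R * R) * B.1 by noncomm_ring, sR, mul_one]
    unfold trace2; rw [Matrix.SpecialLinearGroup.coe_mul]; ring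

lemma isOpen_Hs : IsOpen Hs := by
  have h1 : Continuous fun p : SL2 × SL2 => trace2 p.1 := continuous_trace2.comp continuous_fst
  have h2 : Continuous fun p : SL2 × SL2 => trace2 p.2 := continuous_trace2.comp continuous_snd
  have h3 : Continuous fun p : SL2 × SL2 => trace2 (p.1 * p.2) :=
    continuous_trace2.comp (continuous_fst.sl2_mul continuous_snd)
  exact (isOpen_lt continuous_const h1).inter ((isOpen_lt continuous_const h2).inter
    (isOpen_lt h3 continuous_const))

lemma Hs_subset : Hs ⊆ interior GH := interior_maximal Hs_subset_GH isOpen_Hs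

lemma Hs_of_cjH (P Q : M2) (h : P * Q = 1) (p : SL2 × SL2) (hp : cjH P Q h p ∈ Hs) : p ∈ Hs := by
  obtain ⟨h1, h2, h3⟩ := hp
  have e1 : (cjH P Q h p).1 = cj P Q h p.1 := rfl
  have e2 : (cjH P Q h p).2 = cj P Q h p.2 := rfl
  rw [e1, e2, ← cj_mul] at h3
  rw [e1] at h1
  rw [e2] at h2
  rw [trace_cj] at h1 h2 h3
  exact ⟨h1, h2, h3⟩

/-! ### Pairs with nonnegative entries -/

/-- Pairs of matrices with positive entries. -/
def PosPairs : Set (SL2 × SL2) := {p | ∀ i j, 0 < p.1.1 i j ∧ 0 < p.2.1 i j}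

lemma isOpen_PosPairs : IsOpen PosPairs := by
  have : PosPairs = ⋂ i : Fin 2, ⋂ j : Fin 2,
      ({p : SL2 × SL2 | 0 < p.1.1 i j} ∩ {p : SL2 × SL2 | 0 < p.2.1 i j}) := by
    ext p; simp [PosPairs]
  rw [this]
  refine isOpen_iInter_of_finite fun i => isOpen_iInter_of_finite fun j => ?_
  exact (isOpen_lt continuous_const ((continuous_entry i j).comp continuous_fst)).inter
    (isOpen_lt continuous_const ((continuous_entry i j).comp continuous_snd))

/-- The product of the coordinates of a positive vector is multiplied at least by
`1 + 2 A₀₁ A₁₀` under a positive matrix `A` of determinant one. -/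
lemma mul_step {A : SL2} {m : ℝ} (hA : ∀ i j, 0 < A.1 i j) (hm : m ≤ 1 + 2 * (A.1 0 1 * A.1 1 0))
    {N v0 v1 : ℝ} (h0 : 0 < v0) (h1 : 0 < v1) (hN : N ≤ v0 * v1) (hm0 : 0 ≤ m) :
    m * N ≤ (A.1 0 0 * v0 + A.1 0 1 * v1) * (A.1 1 0 * v0 + A.1 1 1 * v1) := by
  have hd := det_eq A
  have := hA 0 0
  have := hA 0 1
  have := hA 1 0
  have := hA 1 1
  have e1 : 0 ≤ A.1 0 0 * A.1 1 0 * (v0 * v0) := by positivity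
  have e2 : 0 ≤ A.1 0 1 * A.1 1 1 * (v1 * v1) := by positivity
  have e3 : 0 < v0 * v1 := by positivity
  have e4 : m * N ≤ m * (v0 * v1) := mul_le_mul_of_nonneg_left hN hm0
  have e5 := mul_le_mul_of_nonneg_right hm e3.le
  have e6 : A.1 0 0 * A.1 1 1 * (v0 * v1) = (1 + A.1 0 1 * A.1 1 0) * (v0 * v1) := by
    linear_combination (v0 * v1) * hd
  nlinarith

/-- Positive products are applied to the vector `(1, 1)`, and `mul_step` is used at each letter. -/
lemma PosPairs_subset_UH : PosPairs ⊆ UHpairs := by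
  rintro ⟨A, B⟩ hp
  have hA : ∀ i j, 0 < A.1 i j := fun i j => (hp i j).1
  have hB : ∀ i j, 0 < B.1 i j := fun i j => (hp i j).2
  set e := min (A.1 0 1 * A.1 1 0) (B.1 0 1 * B.1 1 0) with he
  have he0 : 0 < e := lt_min (mul_pos (hA _ _) (hA _ _)) (mul_pos (hB _ _) (hB _ _))
  set m := 1 + 2 * e with hm
  have key : ∀ w : List Bool, 0 < (wp (A, B) w).1 0 0 + (wp (A, B) w).1 0 1 ∧
      0 < (wp (A, B) w).1 1 0 + (wp (A, B) w).1 1 1 ∧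
      m ^ w.length ≤ ((wp (A, B) w).1 0 0 + (wp (A, B) w).1 0 1) *
        ((wp (A, B) w).1 1 0 + (wp (A, B) w).1 1 1) := by
    intro w
    induction w with
    | nil => simp [wp_nil]
    | cons b w ih =>
      obtain ⟨h0, h1, h2⟩ := ih
      rw [wp_cons, List.length_cons, pow_succ']
      set M := wp (A, B) w
      have gen : ∀ G : SL2, (∀ i j, 0 < G.1 i j) → e ≤ G.1 0 1 * G.1 1 0 →
          0 < (G * M).1 0 0 + (G * M).1 0 1 ∧ 0 < (G * M).1 1 0 + (G * M).1 1 1 ∧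
          m * m ^ w.length ≤ ((G * M).1 0 0 + (G * M).1 0 1) *
            ((G * M).1 1 0 + (G * M).1 1 1) := by
        intro G hG hGe
        have r0 : (G * M).1 0 0 + (G * M).1 0 1 =
            G.1 0 0 * (M.1 0 0 + M.1 0 1) + G.1 0 1 * (M.1 1 0 + M.1 1 1) := by
          simp [Matrix.mul_apply, Fin.sum_univ_two]; ring
        have r1 : (G * M).1 1 0 + (G * M).1 1 1 =
            G.1 1 0 * (M.1 0 0 + M.1 0 1) + G.1 1 1 * (M.1 1 0 + M.1 1 1) := by
          simp [Matrix.mul_apply, Fin.sum_univ_two]; ring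
        rw [r0, r1]
        exact ⟨add_pos (mul_pos (hG _ _) h0) (mul_pos (hG _ _) h1),
          add_pos (mul_pos (hG _ _) h0) (mul_pos (hG _ _) h1),
          mul_step hG (by linarith) h0 h1 h2 (by linarith)⟩
      cases b
      · exact gen B hB (min_le_right _ _)
      · exact gen A hA (min_le_left _ _)
  rw [mem_UH_iff]
  refine ⟨1, one_pos, √m, by rw [gt_iff_lt, Real.lt_sqrt] <;> linarith, fun w _ => ?_⟩
  obtain ⟨h0, h1, h2⟩ := key w
  refine le_of_sq_le_sq ?_ (en_nonneg _)
  rw [one_mul, ← pow_mul, mul_comm w.length, pow_mul, Real.sq_sqrt (by linarith)]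
  set M := (wp (A, B) w).1
  have : M 0 0 + M 0 1 + (M 1 0 + M 1 1) ≤ en M := by
    unfold en
    linarith [le_abs_self (M 0 0), le_abs_self (M 0 1), le_abs_self (M 1 0), le_abs_self (M 1 1)]
  nlinarith

lemma interior_UH_of_cj {P Q : M2} (h : P * Q = 1) {p : SL2 × SL2}
    (hp : cjH P Q h p ∈ interior UHpairs) : p ∈ interior UHpairs :=
  mem_interior_pull _ (UH_of_cjH P Q h) hp

lemma PosPairs_subset : PosPairs ⊆ interior UHpairs :=
  interior_maximal PosPairs_subset_UH isOpen_PosPairs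

lemma mem_closure_of_path {S : Set (SL2 × SL2)} {p : SL2 × SL2} (f : ℝ → SL2 × SL2)
    (hf : Continuous f) (h0 : f 0 = p) (h : ∀ ε > 0, f ε ∈ S) : p ∈ closure S := by
  have ht := (hf.tendsto 0).mono_left (nhdsWithin_le_nhds (s := Set.Ioi 0))
  rw [h0] at ht
  exact mem_closure_of_tendsto ht (eventually_nhdsWithin_of_forall h)

/-- A path of positive matrices starting at the identity. -/
def pth (ε : ℝ) : SL2 := ⟨!![1, ε; ε, 1 + ε ^ 2], by rw [Matrix.det_fin_two_of]; ring⟩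

lemma continuous_pth : Continuous pth := by
  rw [continuous_sl2_iff]
  intro i j
  fin_cases i <;> fin_cases j <;> simp [pth] <;> fun_prop

lemma pth_mul_pos {A : SL2} (hA : ∀ i j, 0 ≤ A.1 i j) {ε : ℝ} (hε : 0 < ε) (i j : Fin 2) :
    0 < (pth ε * A).1 i j := by
  have hd := det_eq A
  have h00 := hA 0 0
  have h01 := hA 0 1
  have h10 := hA 1 0
  have h11 := hA 1 1
  have p0 : 0 < A.1 0 0 := by
    rcases h00.lt_or_eq with h | h
    · exact h
    · rw [← h] at hd; nlinarith
  have p1 : 0 < A.1 1 1 := by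
    rcases h11.lt_or_eq with h | h
    · exact h
    · rw [← h] at hd; nlinarith
  rw [Matrix.SpecialLinearGroup.coe_mul]
  fin_cases i <;> fin_cases j <;> simp [pth, Matrix.mul_apply, Fin.sum_univ_two] <;> positivity

lemma closure_of_nonneg {p : SL2 × SL2} (hA : ∀ i j, 0 ≤ p.1.1 i j) (hB : ∀ i j, 0 ≤ p.2.1 i j) :
    p ∈ closure (interior UHpairs) := by
  refine mem_closure_of_path (fun ε => (pth ε * p.1, pth ε * p.2))
    ((continuous_pth.sl2_mul continuous_const).prodMk (continuous_pth.sl2_mul continuous_const))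
    ?_ fun ε hε => PosPairs_subset fun i j => ⟨pth_mul_pos hA hε i j, pth_mul_pos hB hε i j⟩
  have : pth 0 = 1 := by
    ext i j
    fin_cases i <;> fin_cases j <;> simp [pth]
  simp [this]

/-! ### Triangular pairs -/

/-- The upper triangular matrix with diagonal `(e^l, e^{-l})` and corner `b`. -/
noncomputable def T (l b : ℝ) : SL2 := ⟨!![Real.exp l, b; 0, Real.exp (-l)], by
  rw [Matrix.det_fin_two_of, ← Real.exp_add]; simp⟩

/-- The lower triangular matrix with diagonal `(e^{-k}, e^k)` and corner `c`. -/
noncomputable def L (k c : ℝ) : SL2 := ⟨!![Real.exp (-k), 0; c, Real.exp k], by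
  rw [Matrix.det_fin_two_of, ← Real.exp_add]; simp⟩

lemma continuous_T {f g : ℝ → ℝ} (hf : Continuous f) (hg : Continuous g) :
    Continuous fun t => T (f t) (g t) := by
  rw [continuous_sl2_iff]
  intro i j
  fin_cases i <;> fin_cases j <;> simp [T] <;> fun_prop

lemma continuous_L {f g : ℝ → ℝ} (hf : Continuous f) (hg : Continuous g) :
    Continuous fun t => L (f t) (g t) := by
  rw [continuous_sl2_iff]
  intro i j
  fin_cases i <;> fin_cases j <;> simp [L] <;> fun_prop

lemma trace_T (l b : ℝ) : trace2 (T l b) = 2 * Real.cosh l := by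
  rw [tr_eq, Real.cosh_eq]; simp [T]; ring

lemma trace_L (l b : ℝ) : trace2 (L l b) = 2 * Real.cosh l := by
  rw [tr_eq, Real.cosh_eq]; simp [L]; ring

lemma trace_TL (l b k c : ℝ) : trace2 (T l b * L k c) = 2 * Real.cosh (l - k) + b * c := by
  rw [tr_eq, Real.cosh_eq, Matrix.SpecialLinearGroup.coe_mul]
  simp [T, L, Matrix.mul_apply, Fin.sum_univ_two, ← Real.exp_add]
  ring_nf

lemma exp_neg_lt {l : ℝ} (hl : 0 < l) : Real.exp (-l) < Real.exp l :=
  Real.exp_lt_exp.2 (by linarith)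

/-- Conjugation by a lower unipotent matrix close to the identity turns both matrices into positive
ones. -/
lemma TT_pos {l b k c : ℝ} (hl : 0 < l) (hb : 0 < b) (hk : 0 < k) (hc : 0 < c) :
    (T l b, T k c) ∈ interior UHpairs := by
  have h1 := exp_neg_lt hl
  have h2 := exp_neg_lt hk
  obtain ⟨δ, hδ0, hδ⟩ := exists_between (lt_min (div_pos (sub_pos.2 h1) hb)
    (div_pos (sub_pos.2 h2) hc))
  have d1 := (lt_div_iff₀ hb).1 (hδ.trans_le (min_le_left _ _))
  have d2 := (lt_div_iff₀ hc).1 (hδ.trans_le (min_le_right _ _))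
  have p1 := Real.exp_pos (-l)
  have p2 := Real.exp_pos (-k)
  have hPQ : (!![1, 0; -δ, 1] : M2) * !![1, 0; δ, 1] = 1 := by
    ext i j; fin_cases i <;> fin_cases j <;> simp
  refine interior_UH_of_cj hPQ (PosPairs_subset fun i j => ⟨?_, ?_⟩)
  · show 0 < (!![1, 0; δ, 1] * (T l b).1 * !![1, 0; -δ, 1]) i j
    fin_cases i <;> fin_cases j <;> simp [T, Matrix.mul_apply, Fin.sum_univ_two] <;> nlinarith
  · show 0 < (!![1, 0; δ, 1] * (T k c).1 * !![1, 0; -δ, 1]) i j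
    fin_cases i <;> fin_cases j <;> simp [T, Matrix.mul_apply, Fin.sum_univ_two] <;> nlinarith

lemma cj_T (l b t : ℝ) (h : (!![1, t; 0, 1] : M2) * !![1, -t; 0, 1] = 1) :
    cj !![1, t; 0, 1] !![1, -t; 0, 1] h (T l b) = T l (b + t * (Real.exp l - Real.exp (-l))) := by
  ext1 i j
  show (!![1, -t; 0, 1] * (T l b).1 * !![1, t; 0, 1] : M2) i j = _
  fin_cases i <;> fin_cases j <;> simp [T, Matrix.mul_apply, Fin.sum_univ_two] ; ring

/-- A translation of the common affine line brings both fixed points to the same side. -/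
lemma TT_interior {l k : ℝ} (b c : ℝ) (hl : 0 < l) (hk : 0 < k) :
    (T l b, T k c) ∈ interior UHpairs := by
  have h1 := sub_pos.2 (exp_neg_lt hl)
  have h2 := sub_pos.2 (exp_neg_lt hk)
  obtain ⟨t, ht⟩ := exists_gt (max (-b / (Real.exp l - Real.exp (-l)))
    (-c / (Real.exp k - Real.exp (-k))))
  have d1 := (div_lt_iff₀ h1).1 ((le_max_left _ _).trans_lt ht)
  have d2 := (div_lt_iff₀ h2).1 ((le_max_right _ _).trans_lt ht)
  have hPQ : (!![1, t; 0, 1] : M2) * !![1, -t; 0, 1] = 1 := by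
    ext i j; fin_cases i <;> fin_cases j <;> simp
  refine interior_UH_of_cj hPQ ?_
  show (cj _ _ hPQ (T l b), cj _ _ hPQ (T k c)) ∈ _
  rw [cj_T, cj_T]
  exact TT_pos hl (by linarith) hk (by linarith)

lemma Cl_TT {l k : ℝ} (b c : ℝ) (hl : 0 ≤ l) (hk : 0 ≤ k) : Cl UHpairs (T l b, T k c) := by
  refine ⟨mem_closure_of_path (fun ε => (T (l + ε) b, T (k + ε) c))
    ((continuous_T (by fun_prop) continuous_const).prodMk
      (continuous_T (by fun_prop) continuous_const)) (by simp)
      fun ε hε => TT_interior _ _ (by linarith) (by linarith), ?_⟩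
  rcases hl.lt_or_eq with h | rfl
  · rcases hk.lt_or_eq with h' | rfl
    · exact Or.inl (TT_interior _ _ h h')
    · exact Or.inr (Cl_part_of_parabolic (Or.inr (Or.inl (by simp [trace_T]))))
  · exact Or.inr (Cl_part_of_parabolic (Or.inl (by simp [trace_T])))

/-- Conjugation by a matrix close to the identity turns both matrices into positive ones. -/
lemma TL_interior {l b k c : ℝ} (hl : 0 < l) (hb : 0 < b) (hk : 0 < k) (hc : 0 < c) :
    (T l b, L k c) ∈ interior UHpairs := by
  have h1 := exp_neg_lt hl
  have h2 := exp_neg_lt hk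
  have p1 := Real.exp_pos (-l)
  have p2 := Real.exp_pos (-k)
  have p3 := Real.exp_pos l
  have p4 := Real.exp_pos k
  set x := Real.exp l with hx
  set x' := Real.exp (-l) with hx'
  set y := Real.exp k with hy
  set y' := Real.exp (-k) with hy'
  have ev : ∀ f : ℝ → ℝ, Continuous f → 0 < f 0 → ∀ᶠ δ in nhdsWithin (0:ℝ) (Set.Ioi 0), 0 < f δ :=
    fun f hf h0 => ((hf.tendsto 0).eventually (lt_mem_nhds h0)).filter_mono nhdsWithin_le_nhds
  have a1 := ev (fun δ => (1 + δ ^ 2) * (x - δ * b) - δ ^ 2 * x') (by fun_prop) (by simpa)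
  have a2 := ev (fun δ => (1 + δ ^ 2) * (b * (1 + δ ^ 2) - δ * x) + δ * (1 + δ ^ 2) * x')
    (by fun_prop) (by simpa)
  have a3 := ev (fun δ => x - δ * b - x') (by fun_prop) (by simpa)
  have a4 := ev (fun δ => δ * (b * (1 + δ ^ 2) - δ * x) + (1 + δ ^ 2) * x')
    (by fun_prop) (by simpa)
  have b1 := ev (fun δ => (1 + δ ^ 2) * y' + δ * (c - δ * y)) (by fun_prop) (by simpa)
  have b2 := ev (fun δ => (1 + δ ^ 2) * (y - y') - δ * c) (by fun_prop) (by simpa)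
  have b3 := ev (fun δ => δ * y' + c - δ * y) (by fun_prop) (by simpa)
  have b4 := ev (fun δ => -δ ^ 2 * y' + y * (1 + δ ^ 2) - δ * c) (by fun_prop) (by simpa)
  obtain ⟨δ, a1, a2, a3, a4, b1, b2, b3, b4, hδ⟩ := (a1.and <| a2.and <| a3.and <| a4.and <|
    b1.and <| b2.and <| b3.and <| b4.and self_mem_nhdsWithin).exists
  replace hδ : 0 < δ := hδ
  have a3' := mul_pos hδ a3
  have b2' := mul_pos hδ b2
  have hPQ : (!![1, -δ; -δ, 1 + δ ^ 2] : M2) * !![1 + δ ^ 2, δ; δ, 1] = 1 := by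
    ext i j; fin_cases i <;> fin_cases j <;> simp <;> ring
  refine interior_UH_of_cj hPQ (PosPairs_subset fun i j => ⟨?_, ?_⟩)
  · show 0 < (!![1 + δ ^ 2, δ; δ, 1] * (T l b).1 * !![1, -δ; -δ, 1 + δ ^ 2]) i j
    fin_cases i <;> fin_cases j <;> simp [T, Matrix.mul_apply, Fin.sum_univ_two] <;> nlinarith
  · show 0 < (!![1 + δ ^ 2, δ; δ, 1] * (L k c).1 * !![1, -δ; -δ, 1 + δ ^ 2]) i j
    fin_cases i <;> fin_cases j <;> simp [L, Matrix.mul_apply, Fin.sum_univ_two] <;> nlinarith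

/-! ### Powers of triangular matrices and heteroclinic connections -/

lemma T_mul (l b l' b' : ℝ) :
    T l b * T l' b' = T (l + l') (Real.exp l * b' + b * Real.exp (-l')) := by
  ext i j
  rw [Matrix.SpecialLinearGroup.coe_mul]
  fin_cases i <;> fin_cases j <;>
    simp [T, Matrix.mul_apply, Fin.sum_univ_two, Real.exp_add, mul_comm]

lemma LT_mul (k c k' c' : ℝ) :
    L k c * L k' c' = L (k + k') (c * Real.exp (-k') + Real.exp k * c') := by
  ext i j
  rw [Matrix.SpecialLinearGroup.coe_mul]
  fin_cases i <;> fin_cases j <;>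
    simp [L, Matrix.mul_apply, Fin.sum_univ_two, Real.exp_add, mul_comm]

lemma sinh_add_exp (l u : ℝ) :
    Real.exp l * Real.sinh u + Real.exp (-u) * Real.sinh l = Real.sinh (l + u) := by
  rw [Real.sinh_eq, Real.sinh_eq, Real.sinh_eq, neg_add, Real.exp_add, Real.exp_add]
  ring

lemma T_pow {l : ℝ} (hl : 0 < l) (b : ℝ) (n : ℕ) :
    T l b ^ n = T (n * l) (b * (Real.sinh (n * l) / Real.sinh l)) := by
  have hs := Real.sinh_pos_iff.2 hl
  induction n with
  | zero =>
    rw [pow_zero]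
    ext i j
    fin_cases i <;> fin_cases j <;> simp [T]
  | succ n ih =>
    rw [pow_succ', ih, T_mul]
    congr 1
    · push_cast; ring
    · have e : ((n + 1 : ℕ) : ℝ) * l = l + n * l := by push_cast; ring
      rw [e, ← sinh_add_exp]
      field_simp

lemma L_pow {k : ℝ} (hk : 0 < k) (c : ℝ) (n : ℕ) :
    L k c ^ n = L (n * k) (c * (Real.sinh (n * k) / Real.sinh k)) := by
  have hs := Real.sinh_pos_iff.2 hk
  induction n with
  | zero =>
    rw [pow_zero]
    ext i j
    fin_cases i <;> fin_cases j <;> simp [L]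
  | succ n ih =>
    rw [pow_succ', ih, LT_mul]
    congr 1
    · push_cast; ring
    · have e : ((n + 1 : ℕ) : ℝ) * k = k + n * k := by push_cast; ring
      rw [e, ← sinh_add_exp]
      field_simp
      ring

lemma wp_powers (p : SL2 × SL2) (m n : ℕ) :
    wp p (List.replicate m true ++ List.replicate n false) = p.1 ^ m * p.2 ^ n := by
  rw [wp_append, wp_replicate, wp_replicate]; simp

/-- A heteroclinic connection: the products `A^m B^n` stay bounded when `e^{ml}` and `e^{nk}`
are comparable. -/
lemma hetero_not_UH {l k : ℝ} (hl : 0 < l) (hk : 0 < k) (c : ℝ) :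
    (T l 0, L k c) ∉ UHpairs := by
  have hs := Real.sinh_pos_iff.2 hk
  refine not_UH_of_linear (Real.exp k + |c| / Real.sinh k + 1)
    (fun m => List.replicate (m + 1) true ++ List.replicate ⌊(m + 1 : ℕ) * l / k⌋₊ false)
    (fun m => by simp; omega) fun m => ?_
  rw [wp_powers]
  set n := ⌊(m + 1 : ℕ) * l / k⌋₊ with hn
  have n1 : (n : ℝ) * k ≤ (m + 1 : ℕ) * l := (le_div_iff₀ hk).1 (Nat.floor_le (by positivity))
  have n2 : (m + 1 : ℕ) * l < (n + 1) * k := (div_lt_iff₀ hk).1 (Nat.lt_floor_add_one _)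
  show en (T l 0 ^ (m + 1) * L k c ^ n).1 ≤ _
  rw [T_pow hl, L_pow hk]
  set u := ((m + 1 : ℕ) : ℝ) * l
  set v := (n : ℝ) * k with hv
  have hv0 : 0 ≤ v := by positivity
  have hval : en (T u (0 * (Real.sinh u / Real.sinh l)) * L v (c * (Real.sinh v / Real.sinh k))).1
      = Real.exp (u - v) + Real.exp (v - u) + |c| / Real.sinh k * (Real.exp (-u) * Real.sinh v) := by
    rw [Matrix.SpecialLinearGroup.coe_mul]
    simp [T, L, en, Matrix.mul_apply, Fin.sum_univ_two, ← Real.exp_add, abs_mul, abs_div,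
      abs_of_pos hs, abs_of_nonneg (Real.sinh_nonneg_iff.2 hv0)]
    ring_nf
  rw [hval]
  have a1 : Real.exp (u - v) ≤ Real.exp k := Real.exp_le_exp.2 (by rw [hv]; linarith)
  have a2 : Real.exp (v - u) ≤ 1 := Real.exp_le_one_iff.2 (by linarith)
  have a3 : Real.exp (-u) * Real.sinh v ≤ 1 := by
    rw [Real.sinh_eq]
    have : Real.exp (-u) * Real.exp v ≤ 1 := by
      rw [← Real.exp_add]; exact Real.exp_le_one_iff.2 (by linarith)
    have := mul_pos (Real.exp_pos (-u)) (Real.exp_pos (-v))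
    nlinarith
  have a4 : 0 ≤ |c| / Real.sinh k := by positivity
  have a5 := mul_le_mul_of_nonneg_left a3 a4
  have a6 := Real.exp_pos k
  have hm : (0:ℝ) ≤ m := Nat.cast_nonneg m
  nlinarith

open Filter in
lemma tendsto_ratio {l k : ℝ} (hl : 0 < l) (hk : 0 < k) :
    Tendsto (fun m : ℕ => 2 * Real.cosh (m * l - m * k) /
      (Real.sinh (m * l) * Real.sinh (m * k))) atTop (nhds 0) := by
  set q := Real.exp (-2 * l) with hq
  set r := Real.exp (-2 * k) with hr
  have tq : Tendsto (fun m : ℕ => q ^ m) atTop (nhds 0) :=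
    tendsto_pow_atTop_nhds_zero_of_lt_one (Real.exp_pos _).le (by rw [Real.exp_lt_one_iff]; linarith)
  have tr : Tendsto (fun m : ℕ => r ^ m) atTop (nhds 0) :=
    tendsto_pow_atTop_nhds_zero_of_lt_one (Real.exp_pos _).le (by rw [Real.exp_lt_one_iff]; linarith)
  have key : Tendsto (fun m : ℕ => 4 * (q ^ m + r ^ m) / ((1 - q ^ m) * (1 - r ^ m))) atTop
      (nhds (4 * (0 + 0) / ((1 - 0) * (1 - 0)))) :=
    ((tq.add tr).const_mul 4).div ((tq.const_sub 1).mul (tr.const_sub 1)) (by norm_num)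
  rw [show (4 * (0 + 0) / ((1 - 0) * (1 - 0)) : ℝ) = 0 by norm_num] at key
  refine key.congr' ?_
  filter_upwards [eventually_gt_atTop 0] with m hm
  have hm' : (0:ℝ) < m := Nat.cast_pos.2 hm
  have eq : q ^ m = Real.exp (-(m * l)) * Real.exp (-(m * l)) := by
    rw [hq, ← Real.exp_nat_mul, ← Real.exp_add]; congr 1; ring
  have er : r ^ m = Real.exp (-(m * k)) * Real.exp (-(m * k)) := by
    rw [hr, ← Real.exp_nat_mul, ← Real.exp_add]; congr 1; ring
  have i1 : Real.exp (m * l) * Real.exp (-(m * l)) = 1 := by rw [← Real.exp_add]; simp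
  have i2 : Real.exp (m * k) * Real.exp (-(m * k)) = 1 := by rw [← Real.exp_add]; simp
  have p1 := Real.sinh_pos_iff.2 (mul_pos hm' hl)
  have p2 := Real.sinh_pos_iff.2 (mul_pos hm' hk)
  have f1 : 1 - q ^ m = 2 * Real.exp (-(m * l)) * Real.sinh (m * l) := by
    rw [eq, Real.sinh_eq]; linear_combination -i1
  have f2 : 1 - r ^ m = 2 * Real.exp (-(m * k)) * Real.sinh (m * k) := by
    rw [er, Real.sinh_eq]; linear_combination -i2
  have f3 : q ^ m + r ^ m =
      2 * Real.exp (-(m * l)) * Real.exp (-(m * k)) * Real.cosh (m * l - m * k) := by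
    rw [Real.cosh_sub, Real.cosh_eq, Real.cosh_eq, Real.sinh_eq, Real.sinh_eq, eq, er]
    linear_combination -(Real.exp (-(m * k)) * Real.exp (-(m * k))) * i1
      - (Real.exp (-(m * l)) * Real.exp (-(m * l))) * i2
  have e1 := Real.exp_pos (-(m * l))
  have e2 := Real.exp_pos (-(m * k))
  rw [f1, f2, f3]
  field_simp
  ring

/-- A heteroclinic connection is destroyed by a perturbation of the corner that makes the trace of
`A^m B^m` vanish. -/
lemma hetero_closure_E {l k c : ℝ} (hl : 0 < l) (hk : 0 < k) (hc : c ≠ 0) :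
    (T l 0, L k c) ∈ closure Epairs := by
  have sl := Real.sinh_pos_iff.2 hl
  have sk := Real.sinh_pos_iff.2 hk
  have ht : Filter.Tendsto (fun m : ℕ => -(2 * Real.cosh (m * l - m * k) /
      (Real.sinh (m * l) * Real.sinh (m * k))) * (Real.sinh l * Real.sinh k / c)) Filter.atTop
      (nhds 0) := by
    simpa using ((tendsto_ratio hl hk).neg).mul_const (Real.sinh l * Real.sinh k / c)
  have hc' : Continuous fun b : ℝ => (T l b, L k c) :=
    (continuous_T continuous_const continuous_id).prodMk continuous_const
  refine mem_closure_of_tendsto ((hc'.tendsto 0).comp ht) ?_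
  filter_upwards [Filter.eventually_gt_atTop 0] with m hm
  have hm' : (0:ℝ) < m := Nat.cast_pos.2 hm
  have p1 := Real.sinh_pos_iff.2 (mul_pos hm' hl)
  have p2 := Real.sinh_pos_iff.2 (mul_pos hm' hk)
  rw [mem_E_iff]
  refine ⟨List.replicate m true ++ List.replicate m false, by simp; omega, ?_⟩
  rw [wp_powers]
  simp only [Function.comp]
  rw [T_pow hl, L_pow hk, trace_TL]
  -- The perturbation is chosen so that the trace of `A^m B^m` vanishes.
  have small : ∀ t : ℝ, t = 0 → |t| < 2 := fun t h => by rw [h]; norm_num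
  apply small
  field_simp
  ring

lemma cjJ (l b k c : ℝ) (h : (!![0, 1; 1, 0] : M2) * !![0, 1; 1, 0] = 1) :
    cjH _ _ h (L k c, T l b) = (T k c, L l b) := by
  refine Prod.ext ?_ ?_
  · ext1 i j
    show (!![0, 1; 1, 0] * (L k c).1 * !![0, 1; 1, 0] : M2) i j = _
    fin_cases i <;> fin_cases j <;> simp [T, L, Matrix.mul_apply, Fin.sum_univ_two]
  · ext1 i j
    show (!![0, 1; 1, 0] * (T l b).1 * !![0, 1; 1, 0] : M2) i j = _
    fin_cases i <;> fin_cases j <;> simp [T, L, Matrix.mul_apply, Fin.sum_univ_two]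

lemma swap_UH (p : SL2 × SL2) (hp : swapH p ∈ UHpairs) : p ∈ UHpairs := by
  simpa using UH_swap _ hp

lemma Cl_TL_swap {l b k c : ℝ} (h : Cl UHpairs (T k c, L l b)) : Cl UHpairs (T l b, L k c) := by
  have hJ : (!![0, 1; 1, 0] : M2) * !![0, 1; 1, 0] = 1 := by
    ext i j; fin_cases i <;> fin_cases j <;> simp
  refine Cl.swap swap_UH (Cl.cj hJ ?_)
  show Cl _ (cjH _ _ hJ (L k c, T l b))
  rwa [cjJ]

lemma TL_nonneg_closure {l b k c : ℝ} (hb : 0 ≤ b) (hc : 0 ≤ c) :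
    (T l b, L k c) ∈ closure (interior UHpairs) := by
  refine closure_of_nonneg (fun i j => ?_) fun i j => ?_
  · fin_cases i <;> fin_cases j <;> simp [T] <;> positivity
  · fin_cases i <;> fin_cases j <;> simp [L] <;> positivity

lemma Cl_TL_hetero {l k c : ℝ} (hl : 0 < l) (hk : 0 < k) (hc : 0 ≤ c) :
    Cl UHpairs (T l 0, L k c) := by
  refine ⟨TL_nonneg_closure le_rfl hc, Or.inr ⟨?_, hetero_not_UH hl hk c⟩⟩
  rw [← closure_closure]
  exact mem_closure_of_path (fun ε => (T l 0, L k (c + ε)))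
    (continuous_const.prodMk (continuous_L continuous_const (by fun_prop))) (by simp)
    fun ε hε => hetero_closure_E hl hk (by linarith)

lemma Cl_TL_nonneg {l b k c : ℝ} (hl : 0 ≤ l) (hb : 0 ≤ b) (hk : 0 ≤ k) (hc : 0 ≤ c) :
    Cl UHpairs (T l b, L k c) := by
  have hcl : (T l b, L k c) ∈ closure (interior UHpairs) := TL_nonneg_closure hb hc
  rcases hl.lt_or_eq with hl | rfl
  swap
  · exact ⟨hcl, Or.inr (Cl_part_of_parabolic (Or.inl (by simp [trace_T])))⟩
  rcases hk.lt_or_eq with hk | rfl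
  swap
  · exact ⟨hcl, Or.inr (Cl_part_of_parabolic (Or.inr (Or.inl (by simp [trace_L]))))⟩
  rcases hb.lt_or_eq with hb | rfl
  · rcases hc.lt_or_eq with hc | rfl
    · exact Cl.of_interior (TL_interior hl hb hk hc)
    · exact Cl_TL_swap (Cl_TL_hetero hk hl hb.le)
  · exact Cl_TL_hetero hl hk hc

lemma Cl_TL {l b k c : ℝ} (hl : 0 ≤ l) (hk : 0 ≤ k) (hbc : 0 ≤ b * c) :
    Cl UHpairs (T l b, L k c) := by
  rcases mul_nonneg_iff.1 hbc with ⟨hb, hc⟩ | ⟨hb, hc⟩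
  · exact Cl_TL_nonneg hl hb hk hc
  · have hJ : (!![1, 0; 0, -1] : M2) * !![1, 0; 0, -1] = 1 := by
      ext i j; fin_cases i <;> fin_cases j <;> simp
    refine Cl.cj hJ ?_
    have : cjH _ _ hJ (T l b, L k c) = (T l (-b), L k (-c)) := by
      refine Prod.ext ?_ ?_
      · ext1 i j
        show (!![1, 0; 0, -1] * (T l b).1 * !![1, 0; 0, -1] : M2) i j = _
        fin_cases i <;> fin_cases j <;> simp [T, Matrix.mul_apply, Fin.sum_univ_two]
      · ext1 i j
        show (!![1, 0; 0, -1] * (L k c).1 * !![1, 0; 0, -1] : M2) i j = _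
        fin_cases i <;> fin_cases j <;> simp [L, Matrix.mul_apply, Fin.sum_univ_two]
    rw [this]
    exact Cl_TL_nonneg hl (by linarith) hk (by linarith)

/-! ### Normal forms -/

lemma T_of {N : SL2} {l : ℝ} (h : N.1 *ᵥ ![1, 0] = Real.exp l • ![1, 0]) : ∃ b, N = T l b := by
  have h0 := congrFun h 0
  have h1 := congrFun h 1
  simp [Matrix.mulVec, dotProduct, Fin.sum_univ_two] at h0 h1
  have hd := det_eq N
  rw [h0, h1, mul_zero, sub_zero] at hd
  have h3 : N.1 1 1 = Real.exp (-l) := by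
    rw [Real.exp_neg]; exact eq_inv_of_mul_eq_one_right hd
  refine ⟨N.1 0 1, ?_⟩
  ext1 i j
  fin_cases i <;> fin_cases j <;> simp [T, h0, h1, h3]

lemma L_of {N : SL2} {k : ℝ} (h : N.1 *ᵥ ![0, 1] = Real.exp k • ![0, 1]) : ∃ c, N = L k c := by
  have h0 := congrFun h 0
  have h1 := congrFun h 1
  simp [Matrix.mulVec, dotProduct, Fin.sum_univ_two] at h0 h1
  have hd := det_eq N
  rw [h0, h1, zero_mul, sub_zero] at hd
  have h3 : N.1 0 0 = Real.exp (-k) := by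
    rw [Real.exp_neg]; exact eq_inv_of_mul_eq_one_left hd
  refine ⟨N.1 1 0, ?_⟩
  ext1 i j
  fin_cases i <;> fin_cases j <;> simp [L, h0, h1, h3]

lemma cj_vec {P Q : M2} (h : P * Q = 1) {A : SL2} {e u : Fin 2 → ℝ} {t : ℝ} (he : P *ᵥ e = u)
    (hu : A.1 *ᵥ u = t • u) : (cj P Q h A).1 *ᵥ e = t • e := by
  show (Q * A.1 * P) *ᵥ e = _
  rw [← Matrix.mulVec_mulVec, he, ← Matrix.mulVec_mulVec, hu, Matrix.mulVec_smul, ← he,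
    Matrix.mulVec_mulVec, _root_.mul_eq_one_comm.1 h, Matrix.one_mulVec]

lemma exists_eigen {A : SL2} (h : 2 ≤ trace2 A) :
    ∃ l : ℝ, 0 ≤ l ∧ ∃ u : Fin 2 → ℝ, u ≠ 0 ∧ A.1 *ᵥ u = Real.exp l • u := by
  set l := Real.arcosh (trace2 A / 2) with hl
  have hc : Real.cosh l = trace2 A / 2 := Real.cosh_arcosh (by linarith)
  refine ⟨l, Real.arcosh_nonneg (by linarith), ?_⟩
  have hdet : (A.1 - Real.exp l • (1 : M2)).det = 0 := by
    have hd := det_eq A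
    have hi : Real.exp l * Real.exp (-l) = 1 := by rw [← Real.exp_add]; simp
    rw [Real.cosh_eq, tr_eq] at hc
    rw [Matrix.det_fin_two]
    simp
    linear_combination hd - hi + 2 * Real.exp l * hc
  obtain ⟨u, hu, h0⟩ := Matrix.exists_mulVec_eq_zero_iff.2 hdet
  refine ⟨u, hu, ?_⟩
  rw [Matrix.sub_mulVec, Matrix.smul_mulVec, Matrix.one_mulVec, sub_eq_zero] at h0
  exact h0

/-- Two matrices of trace at least two are simultaneously conjugate to a pair of triangular
matrices. -/
lemma normal_form {p : SL2 × SL2} (hx : 2 ≤ trace2 p.1) (hy : 2 ≤ trace2 p.2) :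
    ∃ (P Q : M2) (h : P * Q = 1) (l k b c : ℝ), 0 ≤ l ∧ 0 ≤ k ∧
      (cjH P Q h p = (T l b, L k c) ∨ cjH P Q h p = (T l b, T k c)) := by
  obtain ⟨l, hl, u, hu, hAu⟩ := exists_eigen hx
  obtain ⟨k, hk, w, hw, hBw⟩ := exists_eigen hy
  by_cases hD : u 0 * w 1 - w 0 * u 1 = 0
  · have hBu : p.2.1 *ᵥ u = Real.exp k • u := by
      obtain ⟨s, rfl⟩ : ∃ s : ℝ, u = s • w := by
        by_cases h0 : w 0 = 0
        · have h1 : w 1 ≠ 0 := fun h1 => hw (by ext i; fin_cases i <;> simp [h0, h1])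
          refine ⟨u 1 / w 1, ?_⟩
          ext i
          fin_cases i
          · have : u 0 = 0 := by simpa [h0, h1] using hD
            simp [h0, this]
          · simp [h1]
        · refine ⟨u 0 / w 0, ?_⟩
          ext i
          fin_cases i
          · simp [h0]
          · simp
            field_simp
            linarith
      rw [Matrix.mulVec_smul, hBw, smul_comm]
    have hn : u 0 ^ 2 + u 1 ^ 2 ≠ 0 := fun h => hu (by
      have h0 : u 0 = 0 := by nlinarith
      have h1 : u 1 = 0 := by nlinarith
      ext i; fin_cases i <;> simp [h0, h1])
    have hPQ : (!![u 0, -u 1; u 1, u 0] : M2) *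
        ((u 0 ^ 2 + u 1 ^ 2)⁻¹ • !![u 0, u 1; -u 1, u 0]) = 1 := by
      ext i j; fin_cases i <;> fin_cases j <;> simp <;> field_simp <;> ring
    have he : (!![u 0, -u 1; u 1, u 0] : M2) *ᵥ ![1, 0] = u := by
      ext i; fin_cases i <;> simp
    obtain ⟨b, hb⟩ := T_of (cj_vec hPQ he hAu)
    obtain ⟨c, hc⟩ := T_of (cj_vec hPQ he hBu)
    exact ⟨_, _, hPQ, l, k, b, c, hl, hk, Or.inr (Prod.ext hb hc)⟩
  · have hPQ : (!![u 0, w 0; u 1, w 1] : M2) *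
        ((u 0 * w 1 - w 0 * u 1)⁻¹ • !![w 1, -w 0; -u 1, u 0]) = 1 := by
      have hinv := mul_inv_cancel₀ hD
      generalize (u 0 * w 1 - w 0 * u 1)⁻¹ = e at hinv ⊢
      ext i j
      fin_cases i <;> fin_cases j <;> simp <;>
        first | linear_combination hinv | ring
    have he : (!![u 0, w 0; u 1, w 1] : M2) *ᵥ ![1, 0] = u := by
      ext i; fin_cases i <;> simp
    have he' : (!![u 0, w 0; u 1, w 1] : M2) *ᵥ ![0, 1] = w := by
      ext i; fin_cases i <;> simp
    obtain ⟨b, hb⟩ := T_of (cj_vec hPQ he hAu)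
    obtain ⟨c, hc⟩ := L_of (cj_vec hPQ he' hBw)
    exact ⟨_, _, hPQ, l, k, b, c, hl, hk, Or.inl (Prod.ext hb hc)⟩

/-! ### The free cone -/

lemma traces_cjH (P Q : M2) (h : P * Q = 1) (p : SL2 × SL2) :
    trace2 (cjH P Q h p).1 = trace2 p.1 ∧ trace2 (cjH P Q h p).2 = trace2 p.2 ∧
      trace2 ((cjH P Q h p).1 * (cjH P Q h p).2) = trace2 (p.1 * p.2) := by
  refine ⟨trace_cj P Q h _, trace_cj P Q h _, ?_⟩
  rw [← trace_cj P Q h (p.1 * p.2), cj_mul]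
  rfl

/-- The closed free cone lies in the closure of the strict one, by a perturbation of the normal form,
and its boundary pairs have a parabolic product. -/
lemma Cl_free {p : SL2 × SL2} (hx : 2 ≤ trace2 p.1) (hy : 2 ≤ trace2 p.2)
    (hz : trace2 (p.1 * p.2) ≤ -2) : Cl GH p := by
  constructor
  · refine closure_mono Hs_subset ?_
    obtain ⟨P, Q, h, l, k, b, c, hl, hk, hp | hp⟩ := normal_form hx hy
    · refine mem_closure_pull (cjH P Q h) (Hs_of_cjH P Q h) ?_
      have ht := (traces_cjH P Q h p).2.2
      rw [hp] at ht ⊢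
      rw [trace_TL] at ht
      refine mem_closure_of_path (fun ε => (T (l + ε) (b * (1 + ε)), L (k + ε) c))
        ((continuous_T (by fun_prop) (by fun_prop)).prodMk
          (continuous_L (by fun_prop) continuous_const)) (by simp) fun ε hε => ⟨?_, ?_, ?_⟩
      · rw [trace_T]
        linarith [Real.one_lt_cosh.2 (by linarith : l + ε ≠ 0)]
      · rw [trace_L]
        linarith [Real.one_lt_cosh.2 (by linarith : k + ε ≠ 0)]
      · rw [trace_TL, add_sub_add_right_eq_sub]
        have := Real.one_le_cosh (l - k)
        nlinarith
    · have ht := (traces_cjH P Q h p).2.2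
      rw [hp, T_mul, trace_T] at ht
      linarith [Real.one_le_cosh (l + k)]
  · rcases hx.lt_or_eq with hx | hx
    · rcases hy.lt_or_eq with hy | hy
      · rcases hz.lt_or_eq with hz | hz
        · exact Or.inl (Hs_subset ⟨hx, hy, hz⟩)
        · exact Or.inr (Cl_part_of_parabolic (Or.inr (Or.inr (by rw [hz]; norm_num))))
      · exact Or.inr (Cl_part_of_parabolic (Or.inr (Or.inl (by rw [← hy]; norm_num))))
    · exact Or.inr (Cl_part_of_parabolic (Or.inl (by rw [← hx]; norm_num)))

/-! ### Descent -/

lemma nonell {p : SL2 × SL2} (hp : p ∉ Epairs) {w : List Bool} (hw : w ≠ []) :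
    2 ≤ |trace2 (wp p w)| := by
  by_contra h
  exact hp ((mem_E_iff _).2 ⟨w, hw, not_le.1 h⟩)

lemma trace_sq_mul (A B : SL2) :
    trace2 (A * (A * B)) = trace2 A * trace2 (A * B) - trace2 B := by
  have hd := det_eq A
  simp only [tr_eq, Matrix.SpecialLinearGroup.coe_mul, Matrix.mul_apply, Fin.sum_univ_two]
  linear_combination -(B.1 0 0 + B.1 1 1) * hd

lemma trace_comm (A B : SL2) : trace2 (A * B) = trace2 (B * A) := by
  unfold trace2
  rw [Matrix.SpecialLinearGroup.coe_mul, Matrix.SpecialLinearGroup.coe_mul,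
    Matrix.trace_mul_comm]

/-- On a triple of traces at least two with `x ≤ y` and `z < xy / 2`, and with `κ > 0`,
replacing `y` by `xz - y` decreases the sum. -/
lemma descent_ineq {x y z : ℝ} (hx : 2 ≤ x) (hz : 2 ≤ z) (hxy : x ≤ y) (hzz : 2 * z < x * y)
    (hk : 0 < kap x y z) : x * z < 2 * y := by
  by_contra! h
  have aux : ∀ {s t : ℝ}, 2 ≤ t → s ≤ t → 2 ≤ s → (s - 2) * (s + 2 - t ^ 2) ≤ 0 :=
    fun ht hst hs => mul_nonpos_of_nonneg_of_nonpos (by linarith) (by nlinarith)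
  unfold kap at hk
  rcases le_total z y with h1 | h1
  · rcases le_total x z with h2 | h2
    · have a1 := aux hz h2 hx
      have a2 : (y - z) * (y + z - x * z) ≤ 0 :=
        mul_nonpos_of_nonneg_of_nonpos (by linarith) (by nlinarith)
      nlinarith
    · have a1 := aux hx h2 hz
      have a2 : (y - x) * (y + x - x * z) ≤ 0 :=
        mul_nonpos_of_nonneg_of_nonpos (by linarith) (by nlinarith)
      nlinarith
  · have a1 := aux (hx.trans hxy) hxy hx
    have a2 : (z - y) * (z + y - x * y) ≤ 0 :=
      mul_nonpos_of_nonneg_of_nonpos (by linarith) (by nlinarith)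
    nlinarith

/-- The number `κ` is invariant under `F₊`, and each application of `F₊`, after ordering the traces,
decreases their sum by at least `2 √κ`. Hence after finitely many steps the trace of the product is
no longer at least `2`, and the pair has reached the free cone. -/
lemma descent {δ : ℝ} (hδ : 0 < δ) (n : ℕ) : ∀ p : SL2 × SL2, p ∉ Epairs → 2 ≤ trace2 p.1 →
    2 ≤ trace2 p.2 → 2 * trace2 (p.1 * p.2) < trace2 p.1 * trace2 p.2 →
    δ ^ 2 ≤ kap (trace2 p.1) (trace2 p.2) (trace2 (p.1 * p.2)) →
    trace2 p.1 + trace2 p.2 + trace2 (p.1 * p.2) < 6 + 2 * δ * n → Cl GH p := by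
  induction n with
  | zero =>
    intro p hp hx hy _ _ hsum
    refine Cl_free hx hy ?_
    have := nonell hp (w := [true, false]) (by simp)
    rcases le_abs.1 this with h | h <;> simp [wp] at h
    · simp at hsum; linarith
    · linarith
  | succ n ih =>
    have main : ∀ p : SL2 × SL2, p ∉ Epairs → 2 ≤ trace2 p.1 →
        2 ≤ trace2 p.2 → 2 * trace2 (p.1 * p.2) < trace2 p.1 * trace2 p.2 →
        δ ^ 2 ≤ kap (trace2 p.1) (trace2 p.2) (trace2 (p.1 * p.2)) →
        trace2 p.1 + trace2 p.2 + trace2 (p.1 * p.2) < 6 + 2 * δ * (n + 1 : ℕ) →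
        trace2 p.1 ≤ trace2 p.2 → Cl GH p := by
      intro p hp hx hy hz hk hsum hxy
      have := nonell hp (w := [true, false]) (by simp)
      rcases le_abs.1 this with h | h <;> simp only [wp, List.map_cons, List.map_nil,
        List.prod_cons, List.prod_nil, mul_one, if_true, Bool.false_eq_true, if_false] at h
      swap
      · exact Cl_free hx hy (by linarith)
      have hlt := descent_ineq hx h hxy hz (lt_of_lt_of_le (by positivity) hk)
      refine Cl.fplus GH_FH (ih (FH p) (fun hE => hp (E_FH p hE)) hx h ?_ ?_ ?_)
      · show 2 * trace2 (p.1 * (p.1 * p.2)) < trace2 p.1 * trace2 (p.1 * p.2)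
        rw [trace_sq_mul]; linarith
      · show δ ^ 2 ≤ kap (trace2 p.1) (trace2 (p.1 * p.2)) (trace2 (p.1 * (p.1 * p.2)))
        rw [trace_sq_mul]
        refine hk.trans (le_of_eq ?_)
        unfold kap; ring
      · show trace2 p.1 + trace2 (p.1 * p.2) + trace2 (p.1 * (p.1 * p.2)) < _
        rw [trace_sq_mul]
        generalize trace2 p.1 = x at *
        generalize trace2 p.2 = y at *
        generalize trace2 (p.1 * p.2) = z at *
        -- `(2y - xz)² = (x² - 4)(z² - 4) + 4κ`
        have hdec : 2 * δ ≤ 2 * y - x * z := by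
          refine le_of_sq_le_sq ?_ (by linarith)
          have : 0 ≤ (x ^ 2 - 4) * (z ^ 2 - 4) :=
            mul_nonneg (by nlinarith) (by nlinarith)
          unfold kap at hk
          nlinarith
        push_cast at hsum
        linarith
    intro p hp hx hy hz hk hsum
    rcases le_total (trace2 p.1) (trace2 p.2) with h | h
    · exact main p hp hx hy hz hk hsum h
    · refine Cl.swap GH_swap (main (swapH p) (fun hE => hp (E_swap p hE)) hy hx ?_ ?_ ?_ h)
      · show 2 * trace2 (p.2 * p.1) < trace2 p.2 * trace2 p.1
        rw [trace_comm]; linarith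
      · show δ ^ 2 ≤ kap (trace2 p.2) (trace2 p.1) (trace2 (p.2 * p.1))
        rw [trace_comm]
        refine hk.trans (le_of_eq ?_)
        unfold kap; ring
      · show trace2 p.2 + trace2 p.1 + trace2 (p.2 * p.1) < _
        rw [trace_comm]; linarith

/-! ### The alternative -/

/-- In triangular normal form, the sign of `b c` decides between nonnegative matrices and the
descent; in the latter case `κ = b c (b c - 4 sinh l sinh k) ≥ (b c)²`. -/
lemma Cl_of_ge_two {p : SL2 × SL2} (hp : p ∉ Epairs) (hx : 2 ≤ trace2 p.1)
    (hy : 2 ≤ trace2 p.2) : Cl UHpairs p := by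
  obtain ⟨P, Q, h, l, k, b, c, hl, hk, hq | hq⟩ := normal_form hx hy
  · rcases le_or_gt 0 (b * c) with hbc | hbc
    · refine Cl.cj h ?_
      rw [hq]
      exact Cl_TL hl hk hbc
    · obtain ⟨e1, e2, e3⟩ := traces_cjH P Q h p
      rw [hq, trace_TL] at e3
      rw [hq, trace_T] at e1
      rw [hq, trace_L] at e2
      have hs : 0 ≤ Real.sinh l * Real.sinh k :=
        mul_nonneg (Real.sinh_nonneg_iff.2 hl) (Real.sinh_nonneg_iff.2 hk)
      rw [Real.cosh_sub] at e3
      have hkap : (b * c) ^ 2 ≤ kap (trace2 p.1) (trace2 p.2) (trace2 (p.1 * p.2)) := by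
        have : kap (trace2 p.1) (trace2 p.2) (trace2 (p.1 * p.2)) =
            b * c * (b * c - 4 * (Real.sinh l * Real.sinh k)) := by
          rw [← e1, ← e2, ← e3, kap]
          linear_combination (4 - 4 * Real.cosh k ^ 2) * Real.cosh_sq l
            - 4 * Real.sinh l ^ 2 * Real.cosh_sq k
        rw [this]
        nlinarith
      have hδ : 0 < -(b * c) := by linarith
      obtain ⟨n, hn⟩ := exists_nat_gt
        ((trace2 p.1 + trace2 p.2 + trace2 (p.1 * p.2) - 6) / (2 * -(b * c)))
      rw [div_lt_iff₀ (by linarith)] at hn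
      refine Cl.mono GH_subset_UH (descent hδ n p hp hx hy ?_ (by rwa [neg_sq]) (by linarith))
      rw [← e1, ← e2, ← e3]
      nlinarith
  · refine Cl.cj h ?_
    rw [hq]
    exact Cl_TT b c hl hk

lemma Cl_of_snd_ge {p : SL2 × SL2} (hp : p ∉ Epairs) (hy : 2 ≤ trace2 p.2) : Cl UHpairs p := by
  have := nonell hp (w := [true]) (by simp)
  rcases le_abs.1 this with h | h <;> simp [wp] at h
  · exact Cl_of_ge_two hp h hy
  · refine Cl.ng (Cl_of_ge_two (fun hE => hp ((E_ng p).1 hE)) ?_ hy)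
    show 2 ≤ trace2 (ng p.1)
    rwa [trace_ng]

/-- A pair without elliptic products is a limit of interior points of the hyperbolic locus; it is
itself such a point, or else a non-hyperbolic limit of pairs having an elliptic product. -/
lemma Cl_of_not_E {p : SL2 × SL2} (hp : p ∉ Epairs) : Cl UHpairs p := by
  have := nonell hp (w := [false]) (by simp)
  rcases le_abs.1 this with h | h <;> simp [wp] at h
  · exact Cl_of_snd_ge hp h
  · refine Cl.swap swap_UH (Cl.ng (Cl.swap swap_UH (Cl_of_snd_ge (fun hE => hp ?_) ?_)))
    · exact E_swap _ ((E_ng _).1 (E_swap _ hE))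
    · show 2 ≤ trace2 (ng p.2)
      rwa [trace_ng]

/-- **Relation between `𝓗` and `𝓔` for the full 2-shift**:
`∂𝓗 = ∂𝓔 = (𝓗 ∪ 𝓔)ᶜ`; in particular `SL(2,ℝ)²` is the disjoint union of the
open sets `𝓗` and `𝓔` and their common boundary. -/
theorem H_and_E_two_shift :
    frontier UHpairs = frontier Epairs ∧
    frontier UHpairs = (UHpairs ∪ Epairs)ᶜ ∧
    IsOpen UHpairs ∧ IsOpen Epairs ∧ Disjoint UHpairs Epairs := by
  have hd : Disjoint UHpairs Epairs := disjoint_UH_E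
  have hE : IsOpen Epairs := isOpen_E
  have hH : IsOpen UHpairs := by
    rw [← subset_interior_iff_isOpen]
    intro p hp
    exact (Cl_of_not_E (hd.notMem_of_mem_left hp)).2.resolve_right fun h => h.2 hp
  have c1 : closure UHpairs = Epairsᶜ := by
    refine (hd.closure_left hE).subset_compl_right.antisymm fun p hp => ?_
    exact closure_mono interior_subset (Cl_of_not_E hp).1
  have c2 : closure Epairs = UHpairsᶜ := by
    refine (hd.closure_right hH).subset_compl_left.antisymm fun p hp => ?_
    by_cases h : p ∈ Epairs
    · exact subset_closure h
    · exact ((Cl_of_not_E h).2.resolve_left fun hi => hp (interior_subset hi)).1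
  have f1 : frontier UHpairs = (UHpairs ∪ Epairs)ᶜ := by
    rw [hH.frontier_eq, c1, Set.compl_union, Set.sdiff_eq, Set.inter_comm]
  have f2 : frontier Epairs = (UHpairs ∪ Epairs)ᶜ := by
    rw [hE.frontier_eq, c2, Set.compl_union, Set.sdiff_eq]
  exact ⟨f1.trans f2.symm, f1, hH, hE, hd⟩
end

section
/- For every C > 0 there exists C₁ > 0 with the following property: for every N ≥ 1 and all matrices A₁,…,A_N ∈ SL(2,ℝ) satisfying |tr Aᵢ| ≤ C for all i and |tr(AᵢAⱼ)| ≤ C for all i < j, there exists R ∈ SL(2,ℝ) such that ‖R Aᵢ R⁻¹‖ ≤ C₁ for all i. (The constant C₁ depends only on C, not on N.) -/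
/-!
Write `A ∈ SL(2,ℝ)` as `(tr A / 2) • 1 + X` with `X` traceless.  The trace form
`⟨X, Y⟩ = tr (X Y)` has signature `(2,1)` on the three-dimensional space `sl(2,ℝ)`, and the
hypotheses bound `⟨Xᵢ, Xⱼ⟩` for all `i, j` (for `i = j` since `⟨X, X⟩ = (tr A)² / 2 - 2`).

A vector `V` with `⟨V, V⟩ = -2` is a matrix of square `-1`, hence conjugate up to sign to the
rotation `J` by a right angle.  In a frame where `V = ±J`, the squared Euclidean norm of `X` is
`⟨X, X⟩ + ⟨X, V⟩²` (`frame_identity`, with the conjugating matrix `conjMat`).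
It therefore suffices to find `V` with `⟨V, V⟩ = -2` and all `⟨V, Xᵢ⟩` bounded independently of `N`
(`exists_timelike`).

Adding small multiples of a basis of `sl(2,ℝ)` to the family, one may assume that it spans.
Three members `b₀, b₁, b₂` of maximal `|det|` then express all the others with coefficients in
`[-1, 1]` (Cramer), so only the `⟨V, bₖ⟩` need a bound. The Gram matrix `G` of the `bₖ` has bounded
entries and a negative eigenvalue `-μ`, with unit eigenvector `u`. For
`V = √(2/μ) ∑ uₖ bₖ` one gets `⟨V, V⟩ = -2` and `⟨V, bₖ⟩ = -√(2μ) uₖ`, which is bounded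
because `μ` is.
-/

open Matrix

/-! ### The trace form -/

/-- The trace form `tr (X Y)` on `sl(2,ℝ)`, where `x : Fin 3 → ℝ` stands for the matrix
`!![x 0, x 1; x 2, -x 0]`. -/
def traceForm (x y : Fin 3 → ℝ) : ℝ := 2 * (x 0 * y 0) + x 1 * y 2 + x 2 * y 1

lemma traceForm_comm (x y : Fin 3 → ℝ) : traceForm x y = traceForm y x := by
  unfold traceForm; ring

lemma traceForm_sum_right (v : Fin 3 → ℝ) (c : Fin 3 → ℝ) (b : Fin 3 → Fin 3 → ℝ) :
    traceForm v (∑ k, c k • b k) = ∑ k, c k * traceForm v (b k) := by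
  simp only [traceForm, Fin.sum_univ_three, Pi.add_apply, Pi.smul_apply, smul_eq_mul]
  ring

lemma traceForm_sum_left (v : Fin 3 → ℝ) (c : Fin 3 → ℝ) (b : Fin 3 → Fin 3 → ℝ) :
    traceForm (∑ k, c k • b k) v = ∑ k, c k * traceForm (b k) v := by
  simp only [traceForm_comm _ v, traceForm_sum_right]

/-! ### Bases of maximal determinant -/

/-- Cramer's rule. -/
lemma sum_cramer_smul (b : Fin 3 → Fin 3 → ℝ) (hb : (Matrix.of b).det ≠ 0) (w : Fin 3 → ℝ) :
    ∑ k, (((Matrix.of b).updateRow k w).det / (Matrix.of b).det) • b k = w := by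
  have h := Matrix.mulVec_cramer (Matrix.of b)ᵀ w
  rw [Matrix.det_transpose] at h
  ext j
  have hj := congrFun h j
  simp only [Matrix.mulVec, dotProduct, Matrix.transpose_apply, Matrix.cramer_transpose_apply,
    Pi.smul_apply, smul_eq_mul] at hj
  rw [Finset.sum_apply]
  simp only [Pi.smul_apply, smul_eq_mul, div_mul_eq_mul_div]
  rw [← Finset.sum_div, div_eq_iff hb, mul_comm _ (Matrix.of b).det, ← hj]
  exact Finset.sum_congr rfl fun k _ => by simp [mul_comm]

/-- By Cramer's rule, a basis of maximal `|det|` extracted from a family expresses each member of the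
family with coefficients in `[-1, 1]`. -/
lemma exists_coeff_of_max {ι : Type*} (y : ι → Fin 3 → ℝ) (f : Fin 3 → ι)
    (hf : (Matrix.of fun k => y (f k)).det ≠ 0)
    (hmax : ∀ g : Fin 3 → ι,
      |(Matrix.of fun k => y (g k)).det| ≤ |(Matrix.of fun k => y (f k)).det|) (i : ι) :
    ∃ c : Fin 3 → ℝ, (∀ k, |c k| ≤ 1) ∧ y i = ∑ k, c k • y (f k) := by
  set B : Matrix (Fin 3) (Fin 3) ℝ := Matrix.of fun k => y (f k) with hB
  refine ⟨fun k => (B.updateRow k (y i)).det / B.det, fun k => ?_, (sum_cramer_smul _ hf _).symm⟩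
  have hup : B.updateRow k (y i) = Matrix.of fun l => y (Function.update f k i l) := by
    ext a b
    by_cases h : a = k
    · subst h; simp
    · simp [h, hB]
  simp only [hup, abs_div]
  exact div_le_one_of_le₀ (hmax _) (abs_nonneg _)

/-! ### A timelike vector with bounded pairings -/

/-- The Gram matrix of a basis of `sl(2,ℝ)` has a negative eigenvalue. -/
lemma exists_neg_eigenvector (b : Fin 3 → Fin 3 → ℝ) (hb : (Matrix.of b).det ≠ 0) :
    ∃ (μ : ℝ) (u : Fin 3 → ℝ), 0 < μ ∧ ∑ k, u k ^ 2 = 1 ∧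
      ∀ l, ∑ k, traceForm (b l) (b k) * u k = -μ * u l := by
  set G : Matrix (Fin 3) (Fin 3) ℝ := Matrix.of fun k l => traceForm (b k) (b l) with hG
  have hH : G.IsHermitian := by
    ext k l
    simp [hG, traceForm_comm (b l)]
  have hneg : ∃ j, hH.eigenvalues j < 0 := by
    by_contra! hcon
    have hpos := (hH.posSemidef_iff_eigenvalues_nonneg.2 hcon).dotProduct_mulVec_nonneg
    -- The coordinates in the basis `b` of the rotation `!![0, -1; 1, 0]`, of square length `-2`.
    obtain ⟨c, hc⟩ : ∃ c : Fin 3 → ℝ, ∑ k, c k • b k = ![0, -1, 1] :=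
      ⟨_, sum_cramer_smul b hb _⟩
    have h1 : star c ⬝ᵥ (G *ᵥ c) = traceForm (∑ k, c k • b k) (∑ k, c k • b k) := by
      rw [traceForm_sum_left]
      simp only [traceForm_sum_right, dotProduct, Matrix.mulVec, hG, Matrix.of_apply]
      refine Finset.sum_congr rfl fun k _ => ?_
      simp [mul_comm]
    have h2 := hpos c
    rw [h1, hc] at h2
    simp only [traceForm, Matrix.cons_val] at h2
    norm_num at h2
  obtain ⟨j, hj⟩ := hneg
  refine ⟨-hH.eigenvalues j, fun k => hH.eigenvectorBasis j k, by linarith, ?_, fun l => ?_⟩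
  · have h := hH.eigenvectorBasis.orthonormal.1 j
    rw [EuclideanSpace.norm_eq, Real.sqrt_eq_one] at h
    simpa using h
  · have h := congrFun (hH.mulVec_eigenvectorBasis j) l
    simpa [Matrix.mulVec, dotProduct, hG] using h

/-- A spanning family in `sl(2,ℝ)` with Gram matrix bounded by `M` has bounded pairing with some
vector of square length `-2`, the bound depending only on `M`. -/
lemma exists_timelike_of_spanning {ι : Type*} [Finite ι] (y : ι → Fin 3 → ℝ) (M : ℝ)
    (hM : ∀ i j, |traceForm (y i) (y j)| ≤ M)
    (hspan : ∃ f : Fin 3 → ι, (Matrix.of fun k => y (f k)).det ≠ 0) :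
    ∃ v, traceForm v v = -2 ∧ ∀ i, |traceForm v (y i)| ≤ 3 * √(6 * M) := by
  obtain ⟨f₀, hf₀⟩ := hspan
  have : Nonempty (Fin 3 → ι) := ⟨f₀⟩
  obtain ⟨f, hmax⟩ := Finite.exists_max fun g : Fin 3 → ι => |(Matrix.of fun k => y (g k)).det|
  have hf : (Matrix.of fun k => y (f k)).det ≠ 0 :=
    abs_pos.1 ((abs_pos.2 hf₀).trans_le (hmax f₀))
  obtain ⟨μ, u, hμ, hu, hev⟩ := exists_neg_eigenvector (fun k => y (f k)) hf
  have hu1 : ∀ k, u k ^ 2 ≤ 1 := fun k =>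
    hu ▸ Finset.single_le_sum (f := fun k => u k ^ 2) (fun _ _ => sq_nonneg _) (Finset.mem_univ k)
  have hua : ∀ k, |u k| ≤ 1 := fun k => (sq_le_one_iff_abs_le_one _).1 (hu1 k)
  have hM0 : 0 ≤ M := (abs_nonneg _).trans (hM (f 0) (f 0))
  -- `μ² = ‖G u‖²`, and each coordinate of `G u` is estimated by Cauchy–Schwarz.
  have hμM : μ ≤ 3 * M := by
    have hl : ∀ l, (μ * u l) ^ 2 ≤ 3 * M ^ 2 := by
      intro l
      have h1 : (μ * u l) ^ 2 = (∑ k, traceForm (y (f l)) (y (f k)) * u k) ^ 2 := by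
        rw [hev l]; ring
      rw [h1]
      refine (Finset.sum_mul_sq_le_sq_mul_sq _ _ _).trans ?_
      rw [hu, mul_one]
      refine (Finset.sum_le_card_nsmul _ _ (M ^ 2) fun k _ => ?_).trans (by simp)
      exact sq_le_sq' (by linarith [abs_le.1 (hM (f l) (f k))]) (abs_le.1 (hM (f l) (f k))).2
    have h0 := hl 0
    have h1 := hl 1
    have h2 := hl 2
    rw [Fin.sum_univ_three] at hu
    have : μ ^ 2 ≤ (3 * M) ^ 2 := by
      calc μ ^ 2 = (μ * u 0) ^ 2 + (μ * u 1) ^ 2 + (μ * u 2) ^ 2 := by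
            linear_combination (-μ ^ 2) * hu
        _ ≤ (3 * M) ^ 2 := by linarith
    exact abs_le_of_sq_le_sq' this (by positivity) |>.2
  set s := √(2 / μ) with hs
  have hs2 : s ^ 2 * μ = 2 := by
    rw [hs, Real.sq_sqrt (by positivity)]; field_simp
  have hvb : ∀ l, traceForm (∑ k, (s * u k) • y (f k)) (y (f l)) = -(s * μ * u l) := by
    intro l
    rw [traceForm_sum_left]
    calc _ = s * ∑ k, traceForm (y (f l)) (y (f k)) * u k := by
          rw [Finset.mul_sum]
          exact Finset.sum_congr rfl fun k _ => by rw [traceForm_comm]; ring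
      _ = _ := by rw [hev l]; ring
  refine ⟨∑ k, (s * u k) • y (f k), ?_, fun i => ?_⟩
  · rw [traceForm_sum_right]
    simp only [hvb]
    rw [Fin.sum_univ_three] at hu ⊢
    linear_combination (-s ^ 2 * μ) * hu - hs2
  · have hk : ∀ k, |traceForm (∑ k, (s * u k) • y (f k)) (y (f k))| ≤ √(6 * M) := by
      intro k
      refine Real.abs_le_sqrt ?_
      rw [hvb]
      calc (-(s * μ * u k)) ^ 2 = 2 * μ * u k ^ 2 := by linear_combination (μ * u k ^ 2) * hs2
        _ ≤ 2 * μ * 1 := by gcongr; exact hu1 k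
        _ ≤ 6 * M := by linarith
    obtain ⟨c, hc, hi⟩ := exists_coeff_of_max y f hf hmax i
    rw [hi, traceForm_sum_right]
    refine (Finset.abs_sum_le_sum_abs _ _).trans ?_
    refine (Finset.sum_le_card_nsmul _ _ (√(6 * M)) fun k _ => ?_).trans (by simp)
    rw [abs_mul]
    calc _ ≤ 1 * √(6 * M) := by gcongr; exacts [hc k, hk k]
      _ = _ := one_mul _

/-- The same without the spanning hypothesis: the family is completed by `ε` times the standard
basis, with `ε` so small that the Gram matrix stays bounded by `M + 2`. -/
lemma exists_timelike {ι : Type*} [Finite ι] (x : ι → Fin 3 → ℝ) (M : ℝ) (hM0 : 0 ≤ M)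
    (hM : ∀ i j, |traceForm (x i) (x j)| ≤ M) :
    ∃ v, traceForm v v = -2 ∧ ∀ i, |traceForm v (x i)| ≤ 3 * √(6 * (M + 2)) := by
  obtain ⟨L, hL⟩ : ∃ L, ∀ p : ι × Fin 3, |traceForm (x p.1) (Pi.single p.2 1)| ≤ L := by
    obtain ⟨L, hL⟩ := (Set.finite_range fun p : ι × Fin 3 =>
      |traceForm (x p.1) (Pi.single p.2 1)|).bddAbove
    exact ⟨L, fun p => hL ⟨p, rfl⟩⟩
  set ε : ℝ := 1 / (1 + |L|) with hε
  have hε0 : 0 < ε := by positivity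
  have hε1 : ε ≤ 1 := by rw [hε, div_le_one (by positivity)]; linarith [abs_nonneg L]
  have hεL : ε * L ≤ 1 := by
    rw [hε, one_div_mul_eq_div, div_le_one (by positivity)]; linarith [le_abs_self L]
  have hmix : ∀ i k, |traceForm (x i) (ε • Pi.single k 1)| ≤ M + 2 := by
    intro i k
    have h : traceForm (x i) (ε • Pi.single k 1) = ε * traceForm (x i) (Pi.single k 1) := by
      simp only [traceForm, Pi.smul_apply, smul_eq_mul]; ring
    rw [h, abs_mul, abs_of_pos hε0]
    have := mul_le_mul_of_nonneg_left (hL (i, k)) hε0.le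
    simp only at this
    linarith
  have hbasis : ∀ k l : Fin 3,
      |traceForm (ε • Pi.single k 1) (ε • Pi.single l 1)| ≤ M + 2 := by
    intro k l
    have h : traceForm (ε • Pi.single k 1) (ε • Pi.single l 1) =
        ε ^ 2 * traceForm (Pi.single k 1) (Pi.single l 1) := by
      simp only [traceForm, Pi.smul_apply, smul_eq_mul]; ring
    have h2 : |traceForm (Pi.single k 1) (Pi.single l 1)| ≤ 2 := by
      fin_cases k <;> fin_cases l <;> simp [traceForm]
    rw [h, abs_mul, abs_of_pos (by positivity : 0 < ε ^ 2)]
    have := mul_le_mul (pow_le_one₀ hε0.le hε1 : ε ^ 2 ≤ 1) h2 (abs_nonneg _) zero_le_one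
    linarith
  obtain ⟨v, hv, hvx⟩ := exists_timelike_of_spanning
    (Sum.elim x fun k : Fin 3 => ε • Pi.single k (1 : ℝ)) (M + 2)
    (by
      rintro (i | k) (j | l)
      · exact (hM i j).trans (by linarith)
      · exact hmix i l
      · simpa only [Sum.elim_inl, Sum.elim_inr, traceForm_comm (x j)] using hmix j k
      · exact hbasis k l)
    ⟨Sum.inr, by
      rw [Matrix.det_fin_three]
      simp [hε0.ne']⟩
  exact ⟨v, hv, fun i => hvx (Sum.inl i)⟩

/-! ### Conjugating a timelike vector to the standard rotation -/

/-- The upper triangular matrix acting on the upper half plane as the affine map which sends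
`(α + i) / γ` to `i`; here `s = √γ`. -/
noncomputable def conjMat (s α : ℝ) (hs : s ≠ 0) : SL2 :=
  ⟨!![s, -α / s; 0, 1 / s], by rw [Matrix.det_fin_two_of]; field_simp; ring⟩

lemma conj_conjMat (s α : ℝ) (hs : s ≠ 0) (A : SL2) :
    ((conjMat s α hs * A * (conjMat s α hs)⁻¹ : SL2) : Matrix (Fin 2) (Fin 2) ℝ) =
      !![A 0 0 - α * A 1 0 / s ^ 2,
        s ^ 2 * A 0 1 + α * (A 0 0 - A 1 1) - α ^ 2 * A 1 0 / s ^ 2;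
        A 1 0 / s ^ 2, A 1 1 + α * A 1 0 / s ^ 2] := by
  rw [Matrix.SpecialLinearGroup.coe_mul, Matrix.SpecialLinearGroup.coe_mul,
    Matrix.SpecialLinearGroup.coe_inv, conjMat, Matrix.adjugate_fin_two_of]
  ext i j
  fin_cases i <;> fin_cases j <;> simp [Matrix.mul_apply, Matrix.vecMul, dotProduct, Fin.sum_univ_two] <;>
    field_simp <;> ring

/-- With `V = (α, β, γ)` of square length `-2` and `(a', b', c')` the conjugate of `(a, b, c)` by
the matrix taking `V` to the standard rotation, the Euclidean norm of `(a', b', c')` is controlled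
by the trace form. -/
lemma frame_identity (a b c α β γ : ℝ) (hγ : γ ≠ 0) (hV : α ^ 2 + β * γ = -1) :
    2 * (a - α * c / γ) ^ 2 + (γ * b + 2 * α * a - α ^ 2 * c / γ) ^ 2 + (c / γ) ^ 2 =
      2 * (a ^ 2 + b * c) + (2 * (α * a) + β * c + γ * b) ^ 2 := by
  have hβ : β = -(1 + α ^ 2) / γ := by rw [eq_div_iff hγ]; linarith
  subst hβ
  field_simp
  ring

lemma opNorm_le_of_entries (A : Matrix (Fin 2) (Fin 2) ℝ) (K : ℝ)
    (h : ∀ i j, |A i j| ≤ K) : opNorm A ≤ 2 * K := by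
  have hK : 0 ≤ K := (abs_nonneg _).trans (h 0 0)
  refine ContinuousLinearMap.opNorm_le_bound _ (by positivity) fun x => ?_
  refine abs_le_of_sq_le_sq' ?_ (by positivity) |>.2
  rw [mul_pow, EuclideanSpace.norm_sq_eq, EuclideanSpace.norm_sq_eq]
  simp only [Matrix.ofLp_toEuclideanCLM, Matrix.mulVec, dotProduct, Real.norm_eq_abs, sq_abs]
  have hrow : ∀ i, (∑ j, A i j * x j) ^ 2 ≤ 2 * K ^ 2 * ∑ j, x j ^ 2 := by
    intro i
    refine (Finset.sum_mul_sq_le_sq_mul_sq _ _ _).trans ?_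
    gcongr
    refine (Finset.sum_le_card_nsmul _ _ (K ^ 2) fun j _ => ?_).trans (by simp)
    exact sq_le_sq' (by linarith [abs_le.1 (h i j)]) (abs_le.1 (h i j)).2
  rw [Fin.sum_univ_two (fun i => (∑ j, A i j * x j) ^ 2)]
  linarith [hrow 0, hrow 1]

/-- Coordinates of the traceless part of a matrix. -/
noncomputable def tracelessPart (A : SL2) : Fin 3 → ℝ := ![(A 0 0 - A 1 1) / 2, A 0 1, A 1 0]

lemma traceForm_tracelessPart (A B : SL2) :
    traceForm (tracelessPart A) (tracelessPart B) =
      trace2 (A * B) - trace2 A * trace2 B / 2 := by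
  simp [traceForm, tracelessPart, trace2, Matrix.trace_fin_two, Matrix.mul_apply, Fin.sum_univ_two]
  ring

lemma traceForm_tracelessPart_self (A : SL2) :
    traceForm (tracelessPart A) (tracelessPart A) = trace2 A ^ 2 / 2 - 2 := by
  have h := A.det_coe
  rw [Matrix.det_fin_two] at h
  simp [traceForm, tracelessPart, trace2, Matrix.trace_fin_two]
  linear_combination (-2) * h

/-- A vector of square length `-2` gives a conjugation for which the norm of the conjugate of `A`
is controlled by `tr A` and by the pairing of that vector with the traceless part of `A`. -/
lemma exists_conj_bound (v : Fin 3 → ℝ) (hv : traceForm v v = -2) :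
    ∃ R : SL2, ∀ (A : SL2) (C K : ℝ), |trace2 A| ≤ C →
      |traceForm v (tracelessPart A)| ≤ K →
      opNorm ((R * A * R⁻¹ : SL2) : Matrix (Fin 2) (Fin 2) ℝ) ≤ 2 * (C + √(C ^ 2 + K ^ 2)) := by
  -- Replacing `v` by `-v`, its last coordinate may be assumed positive.
  wlog hγ : 0 < v 2 generalizing v
  · have hne : v 2 ≠ 0 := by
      intro h0
      simp only [traceForm, h0] at hv
      nlinarith [sq_nonneg (v 0)]
    have hneg : ∀ w, traceForm (-v) w = -traceForm v w := by
      intro w; simp [traceForm]; ring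
    obtain ⟨R, hR⟩ := this (-v) (by rw [hneg, traceForm_comm, hneg, hv]; ring)
      (by simpa using lt_of_le_of_ne (not_lt.1 hγ) hne)
    exact ⟨R, fun A C K hA hK => hR A C K hA (by rwa [hneg, abs_neg])⟩
  have hs : √(v 2) ≠ 0 := (Real.sqrt_pos.2 hγ).ne'
  refine ⟨conjMat (√(v 2)) (v 0) hs, fun A C K hC hK => opNorm_le_of_entries _ _ fun i j => ?_⟩
  rw [conj_conjMat, Real.sq_sqrt hγ.le]
  have hV : v 0 ^ 2 + v 1 * v 2 = -1 := by
    simp only [traceForm] at hv; linarith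
  have hC0 : 0 ≤ C := (abs_nonneg _).trans hC
  have hid := frame_identity ((A 0 0 - A 1 1) / 2) (A 0 1) (A 1 0) (v 0) (v 1) (v 2) hγ.ne' hV
  have hself := traceForm_tracelessPart_self A
  have hCsq : trace2 A ^ 2 ≤ C ^ 2 := sq_le_sq' (by linarith [abs_le.1 hC]) (abs_le.1 hC).2
  have hKsq : traceForm v (tracelessPart A) ^ 2 ≤ K ^ 2 :=
    sq_le_sq' (by linarith [abs_le.1 hK]) (abs_le.1 hK).2
  have htr : trace2 A = A 0 0 + A 1 1 := by simp [trace2, Matrix.trace_fin_two]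
  simp only [traceForm, tracelessPart, Matrix.cons_val] at hself hKsq
  have hsum : 2 * ((A 0 0 - A 1 1) / 2 - v 0 * A 1 0 / v 2) ^ 2 +
      (v 2 * A 0 1 + 2 * v 0 * ((A 0 0 - A 1 1) / 2) - v 0 ^ 2 * A 1 0 / v 2) ^ 2 +
      (A 1 0 / v 2) ^ 2 ≤ C ^ 2 + K ^ 2 := by
    rw [hid]
    linarith [sq_nonneg C]
  generalize ha' : (A 0 0 - A 1 1) / 2 - v 0 * A 1 0 / v 2 = a' at hsum
  generalize hb' : v 2 * A 0 1 + 2 * v 0 * ((A 0 0 - A 1 1) / 2) - v 0 ^ 2 * A 1 0 / v 2 = b'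
    at hsum
  generalize hc' : A 1 0 / v 2 = c' at hsum
  have ha : |a'| ≤ √(C ^ 2 + K ^ 2) :=
    Real.abs_le_sqrt (by linarith [sq_nonneg a', sq_nonneg b', sq_nonneg c'])
  have hb : |b'| ≤ √(C ^ 2 + K ^ 2) :=
    Real.abs_le_sqrt (by linarith [sq_nonneg a', sq_nonneg c'])
  have hc : |c'| ≤ √(C ^ 2 + K ^ 2) :=
    Real.abs_le_sqrt (by linarith [sq_nonneg a', sq_nonneg b'])
  have e00 : A 0 0 - v 0 * A 1 0 / v 2 = trace2 A / 2 + a' := by rw [← ha', htr]; ring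
  have e01 : v 2 * A 0 1 + v 0 * (A 0 0 - A 1 1) - v 0 ^ 2 * A 1 0 / v 2 = b' := by
    rw [← hb']; ring
  have e11 : A 1 1 + v 0 * A 1 0 / v 2 = trace2 A / 2 - a' := by rw [← ha', htr]; ring
  rw [e00, e01, e11]
  rw [abs_le] at hC ha hb hc ⊢
  fin_cases i <;> fin_cases j <;> simp <;> constructor <;> linarith

/-- **Compactness criterion modulo conjugacy** (Theorem A.1 of
Avila–Bochi–Yoccoz): if all traces `tr Aᵢ` and `tr AᵢAⱼ` are bounded by `C`,
then the family can be simultaneously conjugated into a ball of radius `C₁(C)`. -/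
theorem compactness_criterion (C : ℝ) (hC : 0 < C) :
    ∃ C₁ : ℝ, 0 < C₁ ∧ ∀ N : ℕ, 1 ≤ N → ∀ A : Fin N → SL2,
      (∀ i, |trace2 (A i)| ≤ C) →
      (∀ i j : Fin N, i < j → |trace2 (A i * A j)| ≤ C) →
      ∃ R : SL2, ∀ i,
        opNorm ((R * A i * R⁻¹ : SL2) : Matrix (Fin 2) (Fin 2) ℝ) ≤ C₁ := by
  set M : ℝ := C + C ^ 2 / 2 + 2 with hM
  have hM0 : 0 < M := by positivity
  set K : ℝ := 3 * √(6 * (M + 2)) with hK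
  refine ⟨2 * (C + √(C ^ 2 + K ^ 2)), by positivity, fun N _ A h1 h2 => ?_⟩
  have hprod : ∀ i j, |trace2 (A i) * trace2 (A j) / 2| ≤ C ^ 2 / 2 := by
    intro i j
    rw [abs_div, abs_mul, abs_two]
    have := mul_le_mul (h1 i) (h1 j) (abs_nonneg _) hC.le
    linarith
  have hlt : ∀ i j, i < j →
      |traceForm (tracelessPart (A i)) (tracelessPart (A j))| ≤ M := by
    intro i j hij
    rw [traceForm_tracelessPart]
    refine (abs_sub _ _).trans ?_
    linarith [h2 i j hij, hprod i j]
  have hGram : ∀ i j, |traceForm (tracelessPart (A i)) (tracelessPart (A j))| ≤ M := by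
    intro i j
    rcases lt_trichotomy i j with h | rfl | h
    · exact hlt i j h
    · rw [traceForm_tracelessPart_self, abs_le]
      have := abs_le.1 (hprod i i)
      constructor <;> nlinarith
    · rw [traceForm_comm]; exact hlt j i h
  obtain ⟨v, hv, hvA⟩ := exists_timelike (fun i => tracelessPart (A i)) M hM0.le hGram
  obtain ⟨R, hR⟩ := exists_conj_bound v hv
  exact ⟨R, fun i => hR (A i) C K (h1 i) (hvA i)⟩
end
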